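/- arXiv:math/0502455 — 3 statements merged into one kernel-verified Lean document; each statement's English description precedes it below -/
import Mathlib

section
/- Let N be a continuous nest on a separable infinite-dimensional complex Hilbert space and let K₋ := {X ∈ Alg N : X N(t) is compact for every t < 1}. Then for every X ∈ Alg N the quotient norm is given by dist(X, K₋) = sup{‖N(t) X N(t)‖_e : 0 ≤ t < 1}. -/
open Set Filter Topology

noncomputable def essNorm {H : Type*} [NormedAddCommGroup H] [InnerProductSpace ℂ H]
    [CompleteSpace H] (T : H →L[ℂ] H) : ℝ :=
  Metric.infDist T {K : H →L[ℂ] H | IsCompactOperator ⇑K}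

/-- A continuous nest on `H`, parameterized by `[0,1]`: an increasing family of orthogonal
projections `N t` whose ranges strictly increase, with `N 0 = 0`, `N 1 = 1`, and
`t ↦ N t ξ` norm-continuous on `[0,1]` for every `ξ`. -/
structure ContinuousNest (H : Type*) [NormedAddCommGroup H] [InnerProductSpace ℂ H]
    [CompleteSpace H] where
  N : ℝ → H →L[ℂ] H
  idem : ∀ t ∈ Icc (0 : ℝ) 1, IsIdempotentElem (N t)
  selfAdjoint : ∀ t ∈ Icc (0 : ℝ) 1, IsSelfAdjoint (N t)
  range_lt : ∀ s t : ℝ, s ∈ Icc (0 : ℝ) 1 → t ∈ Icc (0 : ℝ) 1 → s < t →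
    LinearMap.range (N s).toLinearMap < LinearMap.range (N t).toLinearMap
  N_zero : N 0 = 0
  N_one : N 1 = 1
  contOn : ∀ ξ : H, ContinuousOn (fun t => N t ξ) (Icc (0 : ℝ) 1)

variable {H : Type*} [NormedAddCommGroup H] [InnerProductSpace ℂ H] [CompleteSpace H]

/-- `P₁` refines `P₂`: every interval of `P₁` is dominated by an interval of `P₂`
(in the Loewner order). -/
def OpRefines (P₁ P₂ : Set (H →L[ℂ] H)) : Prop :=
  ∀ E ∈ P₁, ∃ F ∈ P₂, ContinuousLinearMap.IsPositive (F - E)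

namespace ContinuousNest

variable (𝒩 : ContinuousNest H)

/-- The nest algebra of `𝒩`. -/
def alg : Set (H →L[ℂ] H) := {T | ∀ t ∈ Icc (0 : ℝ) 1, (1 - 𝒩.N t) * T * 𝒩.N t = 0}

/-- An interval of the nest: a difference `N t - N s` with `0 ≤ s ≤ t ≤ 1`. -/
def IsInterval (E : H →L[ℂ] H) : Prop :=
  ∃ s t : ℝ, 0 ≤ s ∧ s ≤ t ∧ t ≤ 1 ∧ E = 𝒩.N t - 𝒩.N s

def IsIntervalFamily (P : Set (H →L[ℂ] H)) : Prop := ∀ E ∈ P, 𝒩.IsInterval E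

/-- A net of families of intervals: directed under refinement. -/
def IsNet (O : Set (Set (H →L[ℂ] H))) : Prop :=
  (∀ P ∈ O, 𝒩.IsIntervalFamily P) ∧
  ∀ P ∈ O, ∀ Q ∈ O, ∃ R ∈ O, OpRefines R P ∧ OpRefines R Q

def nestSet : Set (H →L[ℂ] H) := 𝒩.N '' Icc (0 : ℝ) 1

/-- An order automorphism of the nest: an order-preserving bijection of `{N t : t ∈ [0,1]}`
onto itself. -/
def IsAuto (θ : (H →L[ℂ] H) → H →L[ℂ] H) : Prop :=
  Set.BijOn θ 𝒩.nestSet 𝒩.nestSet ∧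
  ∀ s t : ℝ, s ∈ Icc (0 : ℝ) 1 → t ∈ Icc (0 : ℝ) 1 → s ≤ t →
    ContinuousLinearMap.IsPositive (θ (𝒩.N t) - θ (𝒩.N s))

/-- The image family `θ(P) = {θ(N t) - θ(N s) : N t - N s ∈ P}`. -/
def autoImage (θ : (H →L[ℂ] H) → H →L[ℂ] H) (P : Set (H →L[ℂ] H)) : Set (H →L[ℂ] H) :=
  {E | ∃ s t : ℝ, 0 ≤ s ∧ s ≤ t ∧ t ≤ 1 ∧ 𝒩.N t - 𝒩.N s ∈ P ∧ E = θ (𝒩.N t) - θ (𝒩.N s)}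

/-- A stable net of intervals. -/
def IsStableNet (O : Set (Set (H →L[ℂ] H))) : Prop :=
  𝒩.IsNet O ∧ ∀ θ, 𝒩.IsAuto θ → ∀ P ∈ O, 𝒩.autoImage θ P ∈ O

/-- The kernel of a net `O`: those `X` in the nest algebra with
`lim_{P ∈ O} sup_{E ∈ P} ‖EXE‖ₑ = 0`; since the sup decreases under refinement, this limit
is `0` iff for every `ε > 0` some `P ∈ O` has all `‖EXE‖ₑ < ε`. -/
def kernel (O : Set (Set (H →L[ℂ] H))) : Set (H →L[ℂ] H) :=
  {X | X ∈ 𝒩.alg ∧ ∀ ε : ℝ, 0 < ε → ∃ P ∈ O, ∀ E ∈ P, essNorm (E * X * E) < ε}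

/-- A two-sided ideal of the nest algebra. -/
def IsIdeal (I : Set (H →L[ℂ] H)) : Prop :=
  I ⊆ 𝒩.alg ∧ (0 : H →L[ℂ] H) ∈ I ∧
  (∀ X ∈ I, ∀ Y ∈ I, X + Y ∈ I) ∧ (∀ X ∈ I, -X ∈ I) ∧
  ∀ A ∈ 𝒩.alg, ∀ X ∈ I, A * X ∈ I ∧ X * A ∈ I

/-- A stable ideal: a norm-closed two-sided ideal invariant under every automorphism
`T ↦ S T S⁻¹` of the nest algebra implemented by an invertible `S ∈ B(H)`. -/
def IsStableIdeal (I : Set (H →L[ℂ] H)) : Prop :=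
  𝒩.IsIdeal I ∧ IsClosed I ∧
  ∀ S : (H →L[ℂ] H)ˣ,
    (fun T => (↑S : H →L[ℂ] H) * T * (↑S⁻¹ : H →L[ℂ] H)) '' 𝒩.alg = 𝒩.alg →
    (fun T => (↑S : H →L[ℂ] H) * T * (↑S⁻¹ : H →L[ℂ] H)) '' I = I

end ContinuousNest

/-!
The lower bound is compression: if `K N(t)` is compact, then so is `N(t) K N(t)`, and
`‖N(t) (X - K) N(t)‖ ≤ ‖X - K‖`.

For the upper bound, let `β` exceed the supremum and choose `tₙ ↑ 1`. It suffices to find a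
coherent sequence `Yₙ` in the nest algebra, `Yₙ₊₁ N(tₙ) = Yₙ`, with `X N(tₙ) - Yₙ` compact and
`‖Yₙ‖ < β`: its strong limit `Z` satisfies `‖Z‖ ≤ β`, and `X - Z ∈ K₋`. To pass from `P = N(tₙ)` to
`Q = N(tₙ₊₁)`, the operator `A = X Q - (X P - Yₙ)` restricts to `Yₙ` on the range of `P` and is
within `β` of a compact operator, and one sets `Yₙ₊₁ = A B Q` with `B = P + (1 - P) L (1 - P)`.
Here `L` belongs to the nest algebra, `1 - L` is compact, `‖L‖` is close to `1` and `L*` is close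
to `0` strongly, so that asymptotically `‖A B‖ ≤ max ‖A P‖ ‖A‖ₑ`.

To make `L* y` small, cut the nest into `n + 1` intervals on which `y` has equal mass. The backward
shift `S` along the pieces of `y` lies in the nest algebra and `‖y - S* y‖ = ‖y‖ / √(n + 1)`; one
takes `L = (1 - S) (1 - r S)⁻¹` with `r < 1` close to `1`.
-/

section OperatorNorm

open ContinuousLinearMap

variable {𝕜 E F ι : Type*} [DenselyNormedField 𝕜] [NormedAddCommGroup E] [NormedSpace 𝕜 E]
  [NormedAddCommGroup F] [NormedSpace 𝕜 F]

lemma eventually_opNorm_lt {T : ι → E →L[𝕜] F} {l : Filter ι} {c β : ℝ} (hcβ : c < β)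
    (h : ∀ x : ι → E, (∀ i, ‖x i‖ ≤ 1) → ∀ᶠ i in l, ‖T i (x i)‖ < c) :
    ∀ᶠ i in l, ‖T i‖ < β := by
  have hex : ∀ i, ∃ x, ‖x‖ ≤ 1 ∧ (β ≤ ‖T i‖ → c < ‖T i x‖) := fun i ↦ by
    by_cases hi : β ≤ ‖T i‖
    · obtain ⟨x, hx, hcx⟩ := exists_lt_apply_of_lt_opNorm (T i) (hcβ.trans_le hi)
      exact ⟨x, hx.le, fun _ ↦ hcx⟩
    · exact ⟨0, by simp, fun h ↦ absurd h hi⟩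
  choose x hx hxc using hex
  filter_upwards [h x hx] with i hi
  exact lt_of_not_ge fun hβ ↦ hi.not_gt (hxc i hβ)

end OperatorNorm

section StrongLimit

open ContinuousLinearMap

variable {𝕜 E F : Type*} [NontriviallyNormedField 𝕜] [NormedAddCommGroup E] [NormedSpace 𝕜 E]
  [NormedAddCommGroup F] [NormedSpace 𝕜 F]

lemma exists_tendsto_apply_of_comp_eq [CompleteSpace F] {P : ℕ → E →L[𝕜] E} {Y : ℕ → E →L[𝕜] F}
    {β : ℝ} (hP : ∀ x, Tendsto (fun n ↦ P n x) atTop (𝓝 x)) (hY : ∀ n, ‖Y n‖ ≤ β)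
    (hYP : ∀ m n, m ≤ n → Y n ∘L P m = Y m) :
    ∃ Z : E →L[𝕜] F, ‖Z‖ ≤ β ∧ (∀ x, Tendsto (fun n ↦ Y n x) atTop (𝓝 (Z x))) ∧
      ∀ m, Z ∘L P m = Y m := by
  have hdist : ∀ x m n, m ≤ n → dist (Y m x) (Y n x) ≤ β * ‖x - P m x‖ := fun x m n hmn ↦ by
    have hdiff : Y n x - Y m x = Y n (x - P m x) := by
      rw [map_sub, ← hYP m n hmn, comp_apply]
    rw [dist_comm, dist_eq_norm, hdiff]
    exact (Y n).le_of_opNorm_le (hY n) _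
  have htend : ∀ x, Tendsto (fun m ↦ β * ‖x - P m x‖) atTop (𝓝 0) := fun x ↦ by
    simpa using ((hP x).const_sub x).norm.const_mul β
  choose g hg using fun x ↦
    cauchySeq_tendsto_of_complete (cauchySeq_of_le_tendsto_0' _ (hdist x) (htend x))
  let Z : E →L[𝕜] F := (linearMapOfTendsto g (fun n ↦ (Y n : E →ₗ[𝕜] F))
    (tendsto_pi_nhds.2 hg)).mkContinuous β fun x ↦
      le_of_tendsto (hg x).norm (.of_forall fun n ↦ (Y n).le_of_opNorm_le (hY n) x)
  refine ⟨Z, LinearMap.mkContinuous_norm_le _ ((norm_nonneg _).trans (hY 0)) _, hg,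
    fun m ↦ ext fun x ↦ tendsto_nhds_unique (hg (P m x)) (tendsto_const_nhds.congr' ?_)⟩
  filter_upwards [eventually_ge_atTop m] with n hn
  rw [← hYP m n hn, comp_apply]

end StrongLimit

section Hilbert

open ContinuousLinearMap InnerProductSpace

variable {𝕜 E ι : Type*} [RCLike 𝕜] [NormedAddCommGroup E] [InnerProductSpace 𝕜 E]

lemma isCompactOperator_rankOne (x y : E) : IsCompactOperator ⇑(rankOne 𝕜 x y) := by
  rw [rankOne_def']
  exact (isCompactOperator_of_locallyCompactSpace_dom (innerSL 𝕜 y)).clm_comp (toSpanSingleton 𝕜 x)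

section Shift

variable {n : ℕ} {w : Fin (n + 1) → E}

variable (𝕜 w) in
/-- The backward shift `w (i + 1) ↦ w i`, `w 0 ↦ 0` along a finite orthonormal system `w`,
vanishing on its orthogonal complement. -/
noncomputable def backwardShift : E →L[𝕜] E :=
  ∑ i : Fin n, rankOne 𝕜 (w i.castSucc) (w i.succ)

lemma backwardShift_apply (x : E) :
    backwardShift 𝕜 w x = ∑ i : Fin n, ⟪w i.succ, x⟫_𝕜 • w i.castSucc := by
  simp only [backwardShift, _root_.sum_apply, rankOne_apply]

lemma isCompactOperator_backwardShift : IsCompactOperator ⇑(backwardShift 𝕜 w) :=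
  (compactOperator (RingHom.id 𝕜) E E).sum_mem fun _ _ ↦ isCompactOperator_rankOne _ _

lemma norm_backwardShift_le_one (hw : Orthonormal 𝕜 w) : ‖backwardShift 𝕜 w‖ ≤ 1 := by
  have hcast : Orthonormal 𝕜 fun i : Fin n ↦ w i.castSucc :=
    hw.comp _ (Fin.castSucc_injective n)
  have hsucc : Orthonormal 𝕜 fun i : Fin n ↦ w i.succ := hw.comp _ (Fin.succ_injective n)
  refine opNorm_le_bound _ zero_le_one fun x ↦ le_of_sq_le_sq ?_ (by positivity)
  rw [one_mul]
  calc ‖backwardShift 𝕜 w x‖ ^ 2 = ∑ i : Fin n, ‖⟪w i.succ, x⟫_𝕜‖ ^ 2 := by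
        rw [backwardShift_apply, ← @inner_self_eq_norm_sq 𝕜, hcast.inner_sum, map_sum]
        simp only [RCLike.conj_mul, ← RCLike.ofReal_pow, RCLike.ofReal_re]
    _ ≤ ‖x‖ ^ 2 := hsucc.sum_inner_products_le x

variable [CompleteSpace E]

lemma sum_sub_star_backwardShift_sum (hw : Orthonormal 𝕜 w) :
    ∑ i, w i - star (backwardShift 𝕜 w) (∑ i, w i) = w 0 := by
  have hinner : ∀ i : Fin n, ⟪w i.castSucc, ∑ j, w j⟫_𝕜 = 1 := fun i ↦ by
    simp only [inner_sum, orthonormal_iff_ite.1 hw, Finset.sum_ite_eq, Finset.mem_univ, if_true]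
  have hstar : star (backwardShift 𝕜 w) (∑ i, w i) = ∑ i : Fin n, w i.succ := by
    simp only [backwardShift, star_sum, star_eq_adjoint, adjoint_rankOne, _root_.sum_apply,
      rankOne_apply, hinner, one_smul]
  rw [hstar, Fin.sum_univ_succ, add_sub_cancel_right]

end Shift

section Damping

variable {r : ℝ} {S : E →L[𝕜] E}

variable (r S) in
/-- For a contraction `S`, the operator `(1 - S) (1 - r S)⁻¹`, expanded in powers of `S`. -/
noncomputable def damping : E →L[𝕜] E := (1 - S) * ∑' k : ℕ, ((r : 𝕜) • S) ^ k

lemma norm_ofReal_smul_le (hS : ‖S‖ ≤ 1) (hr : 0 ≤ r) : ‖(r : 𝕜) • S‖ ≤ r := by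
  rw [norm_smul, RCLike.norm_of_nonneg hr]
  exact mul_le_of_le_one_right hr hS

variable [CompleteSpace E]

lemma one_sub_smul_mul_tsum_pow (hS : ‖S‖ ≤ 1) (hr₀ : 0 ≤ r) (hr₁ : r < 1) :
    (1 - (r : 𝕜) • S) * ∑' k : ℕ, ((r : 𝕜) • S) ^ k = 1 :=
  mul_neg_geom_series _ ((norm_ofReal_smul_le hS hr₀).trans_lt hr₁)

lemma one_sub_damping (hS : ‖S‖ ≤ 1) (hr₀ : 0 ≤ r) (hr₁ : r < 1) :
    1 - damping r S = ((1 - r : ℝ) : 𝕜) • (S * ∑' k : ℕ, ((r : 𝕜) • S) ^ k) := by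
  set G := ∑' k : ℕ, ((r : 𝕜) • S) ^ k
  have hS_sub : (1 - (r : 𝕜) • S) - (1 - S) = ((1 - r : ℝ) : 𝕜) • S := by
    push_cast
    module
  calc 1 - damping r S = (1 - (r : 𝕜) • S) * G - (1 - S) * G := by
        rw [one_sub_smul_mul_tsum_pow hS hr₀ hr₁, damping]
    _ = ((1 - r : ℝ) : 𝕜) • (S * G) := by rw [← sub_mul, hS_sub, smul_mul_assoc]

lemma norm_damping_le (hS : ‖S‖ ≤ 1) (hr₀ : 0 < r) (hr₁ : r < 1) : ‖damping r S‖ ≤ r⁻¹ := by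
  refine opNorm_le_bound _ (by positivity) fun x ↦ ?_
  set z := (∑' k : ℕ, ((r : 𝕜) • S) ^ k) x
  set d := (1 - S) z with hd
  have hx : x = (r : 𝕜) • d + ((1 - r : ℝ) : 𝕜) • z := by
    have hxz : (1 - (r : 𝕜) • S) z = x :=
      congr($(one_sub_smul_mul_tsum_pow hS hr₀.le hr₁) x)
    rw [← hxz, hd]
    simp only [sub_apply, one_apply_eq_self, _root_.smul_apply]
    push_cast
    module
  have hre : 0 ≤ RCLike.re ⟪d, z⟫_𝕜 := by
    have hSz : RCLike.re ⟪S z, z⟫_𝕜 ≤ ‖z‖ * ‖z‖ :=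
      (re_inner_le_norm _ _).trans (by gcongr; simpa using S.le_of_opNorm_le hS z)
    rw [hd, sub_apply, one_apply_eq_self, inner_sub_left, map_sub, inner_self_eq_norm_mul_norm]
    linarith
  have hsq : (r * ‖d‖) ^ 2 ≤ ‖x‖ ^ 2 := by
    rw [hx, @norm_add_sq 𝕜, norm_smul, norm_smul, RCLike.norm_of_nonneg hr₀.le,
      RCLike.norm_of_nonneg (sub_nonneg.2 hr₁.le), inner_smul_left, inner_smul_right,
      RCLike.conj_ofReal, RCLike.re_ofReal_mul, RCLike.re_ofReal_mul]
    have := mul_nonneg hr₀.le (mul_nonneg (sub_nonneg.2 hr₁.le) hre)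
    linarith [sq_nonneg ((1 - r) * ‖z‖)]
  rw [inv_mul_eq_div, le_div_iff₀' hr₀]
  exact le_of_sq_le_sq hsq (norm_nonneg x)

lemma norm_star_damping_apply_le (hS : ‖S‖ ≤ 1) (hr₀ : 0 ≤ r) (hr₁ : r < 1) (y : E) :
    ‖star (damping r S) y‖ ≤ (1 - r)⁻¹ * ‖y - star S y‖ := by
  have hlt : ‖(r : 𝕜) • S‖ < 1 := (norm_ofReal_smul_le hS hr₀).trans_lt hr₁
  have hG : ‖∑' k : ℕ, ((r : 𝕜) • S) ^ k‖ ≤ (1 - r)⁻¹ := by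
    refine (tsum_geometric_le_of_norm_lt_one _ hlt).trans ?_
    have h1 : ‖(1 : E →L[𝕜] E)‖ ≤ 1 := norm_id_le
    have h2 : (1 - ‖(r : 𝕜) • S‖)⁻¹ ≤ (1 - r)⁻¹ :=
      inv_anti₀ (sub_pos.2 hr₁) (by linarith [norm_ofReal_smul_le hS hr₀])
    linarith
  rw [damping, star_mul, star_sub, star_one]
  exact le_of_opNorm_le (star (∑' k : ℕ, ((r : 𝕜) • S) ^ k)) ((norm_star _).trans_le hG) _

end Damping

variable [CompleteSpace E]

section StarProjection

variable {P : E →L[𝕜] E}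

lemma inner_starProjection_left (hP : IsStarProjection P) (x y : E) : ⟪P x, y⟫_𝕜 = ⟪x, P y⟫_𝕜 :=
  hP.isSelfAdjoint.isSymmetric x y

lemma norm_starProjection_add_sq (hP : IsStarProjection P) (x y : E) :
    ‖P x + (1 - P) y‖ ^ 2 = ‖P x‖ ^ 2 + ‖(1 - P) y‖ ^ 2 := by
  have h : ⟪P x, (1 - P) y⟫_𝕜 = 0 := by
    rw [inner_starProjection_left hP, ← mul_apply_eq_comp, hP.mul_one_sub_self, zero_apply,
      inner_zero_right]
  simpa only [sq] using norm_add_sq_eq_norm_sq_add_norm_sq_of_inner_eq_zero _ _ h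

lemma norm_sq_eq_starProjection_add (hP : IsStarProjection P) (x : E) :
    ‖x‖ ^ 2 = ‖P x‖ ^ 2 + ‖(1 - P) x‖ ^ 2 := by
  rw [← norm_starProjection_add_sq hP, sub_apply, one_apply_eq_self, add_sub_cancel]

lemma starProjection_apply_eq_self_of_norm_eq (hP : IsStarProjection P) {x : E} (h : ‖P x‖ = ‖x‖) :
    P x = x := by
  have hzero : ‖(1 - P) x‖ ^ 2 = 0 := by
    rw [← add_eq_left (a := ‖P x‖ ^ 2), ← norm_sq_eq_starProjection_add hP, h]
  rw [sq_eq_zero_iff, norm_eq_zero, sub_apply, one_apply_eq_self, sub_eq_zero] at hzero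
  exact hzero.symm

lemma norm_starProjection_add_compression_le (hP : IsStarProjection P) (T : E →L[𝕜] E) :
    ‖P + (1 - P) * T * (1 - P)‖ ≤ max 1 ‖T‖ := by
  refine opNorm_le_bound _ (by positivity) fun x ↦ ?_
  set y := (1 - P) x
  have hTy : ‖(1 - P) (T y)‖ ≤ max 1 ‖T‖ * ‖y‖ :=
    calc ‖(1 - P) (T y)‖ ≤ 1 * (‖T‖ * ‖y‖) :=
          le_of_opNorm_le_of_le _ (IsStarProjection.norm_le _ hP.one_sub) (T.le_opNorm y)
      _ ≤ max 1 ‖T‖ * ‖y‖ := by rw [one_mul]; gcongr; exact le_max_right _ _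
  have hPx : ‖P x‖ ≤ max 1 ‖T‖ * ‖P x‖ := le_mul_of_one_le_left (norm_nonneg _) (le_max_left _ _)
  refine le_of_sq_le_sq ?_ (by positivity)
  calc ‖P x + (1 - P) (T y)‖ ^ 2 = ‖P x‖ ^ 2 + ‖(1 - P) (T y)‖ ^ 2 :=
        norm_starProjection_add_sq hP _ _
    _ ≤ (max 1 ‖T‖ * ‖P x‖) ^ 2 + (max 1 ‖T‖ * ‖y‖) ^ 2 := by gcongr
    _ = (max 1 ‖T‖ * ‖x‖) ^ 2 := by
        rw [mul_pow _ ‖x‖, norm_sq_eq_starProjection_add hP x]; ring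

end StarProjection

section WeakConvergence

lemma exists_weak_limit_ultrafilter {U : Ultrafilter ι} {x : ι → E} {r : ℝ} (hx : ∀ i, ‖x i‖ ≤ r) :
    ∃ x₀, ‖x₀‖ ≤ r ∧ ∀ y, Tendsto (fun i ↦ ⟪x i, y⟫_𝕜) U (𝓝 ⟪x₀, y⟫_𝕜) := by
  let φ : ι → WeakDual 𝕜 E := fun i ↦ StrongDual.toWeakDual (toDual 𝕜 E (x i))
  have hφ : U.map φ ≤ 𝓟 (WeakDual.toStrongDual ⁻¹' Metric.closedBall (0 : StrongDual 𝕜 E) r) :=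
    tendsto_principal.2 <| .of_forall fun i ↦ by simpa [φ] using hx i
  obtain ⟨f, hf, hφf⟩ := (WeakDual.isCompact_closedBall 0 r).ultrafilter_le_nhds (U.map φ) hφ
  refine ⟨(toDual 𝕜 E).symm (WeakDual.toStrongDual f), by simpa using hf, fun y ↦ ?_⟩
  have hfy : Tendsto (fun i ↦ φ i y) U (𝓝 (f y)) :=
    ((WeakDual.eval_continuous y).tendsto f).comp hφf
  rwa [toDual_symm_apply]

variable {l : Filter ι} {z : ι → E} {r : ℝ} {C : E →L[𝕜] E}

lemma tendsto_apply_of_weakly_null (hC : IsCompactOperator ⇑C)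
    (hr : ∀ i, ‖z i‖ ≤ r) (hz : ∀ y, Tendsto (fun i ↦ ⟪z i, y⟫_𝕜) l (𝓝 0)) :
    Tendsto (fun i ↦ C (z i)) l (𝓝 0) := by
  rw [tendsto_iff_ultrafilter]
  intro U hU
  obtain ⟨S, hS, hCS⟩ := hC.image_closedBall_subset_compact r
  obtain ⟨w, -, hw⟩ := hS.ultrafilter_le_nhds (U.map fun i ↦ C (z i)) <|
    tendsto_principal.2 <| .of_forall fun i ↦ hCS ⟨z i, by simpa using hr i, rfl⟩
  have hw' : Tendsto (fun i ↦ C (z i)) U (𝓝 w) := hw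
  suffices w = 0 from this ▸ hw'
  have hlim : Tendsto (fun i ↦ ⟪C (z i), w⟫_𝕜) U (𝓝 0) := by
    simpa only [adjoint_inner_right] using (hz (adjoint C w)).mono_left hU
  exact inner_self_eq_zero.1 (tendsto_nhds_unique (hw'.inner tendsto_const_nhds) hlim)

lemma tendsto_adjoint_apply_of_weakly_null (hC : IsCompactOperator ⇑C)
    (hr : ∀ i, ‖z i‖ ≤ r) (hz : ∀ y, Tendsto (fun i ↦ ⟪z i, y⟫_𝕜) l (𝓝 0)) :
    Tendsto (fun i ↦ adjoint C (z i)) l (𝓝 0) := by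
  have hCC : Tendsto (fun i ↦ r * ‖C (adjoint C (z i))‖) l (𝓝 0) := by
    simpa using
      (tendsto_apply_of_weakly_null (C := C ∘L adjoint C) (hC.comp_clm _) hr hz).norm.const_mul r
  have hle : ∀ i, ‖adjoint C (z i)‖ ^ 2 ≤ r * ‖C (adjoint C (z i))‖ := fun i ↦ by
    rw [← @inner_self_eq_norm_sq 𝕜, adjoint_inner_left]
    exact (re_inner_le_norm _ _).trans (mul_le_mul_of_nonneg_right (hr i) (norm_nonneg _))
  have hsq := squeeze_zero (fun _ ↦ sq_nonneg _) hle hCC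
  rw [tendsto_zero_iff_norm_tendsto_zero]
  simpa using hsq.sqrt

end WeakConvergence

section AsymptoticProjection

variable {l : Filter ι} {P T K : E →L[𝕜] E} {a : ι → ℝ} {b : ℝ}

lemma norm_starProjection_add_apply_sq {Q : E →L[𝕜] E} (hP : IsStarProjection P)
    (hPQ : P * Q = P) (x y : E) :
    ‖P x + Q y‖ ^ 2 = ‖P x‖ ^ 2 + 2 * RCLike.re ⟪P x, y⟫_𝕜 + ‖Q y‖ ^ 2 := by
  have hPP : P (P x) = P x := congr($hP.isIdempotentElem x)
  have hPQy : P (Q y) = P y := congr($hPQ y)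
  have h : ⟪P x, Q y⟫_𝕜 = ⟪P x, y⟫_𝕜 := by
    rw [← hPP, inner_starProjection_left hP, hPQy, ← inner_starProjection_left hP]
  rw [@norm_add_sq 𝕜, h]

lemma norm_starProjection_add_sq_le {Q : E →L[𝕜] E} {a : ℝ} (hP : IsStarProjection P)
    (hPQ : P * Q = P) (hQ : ‖Q‖ ≤ a) (hPT : ‖P * T‖ ≤ b) (hTK : ‖T - K‖ ≤ b) {x z : E}
    (hx : ‖x‖ ≤ 1) (hxz : ‖x + z‖ ≤ 1) :
    ‖P (T x) + Q (T z)‖ ^ 2 ≤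
      b ^ 2 * ‖x‖ ^ 2 + 2 * RCLike.re ⟪P (T x), T z⟫_𝕜 +
        a ^ 2 * (b ^ 2 * (1 - ‖x‖ ^ 2 - 2 * RCLike.re ⟪x, z⟫_𝕜) + 4 * b * ‖K z‖ + ‖K z‖ ^ 2) := by
  have hb : 0 ≤ b := (norm_nonneg _).trans hPT
  have hPTx : ‖P (T x)‖ ≤ b * ‖x‖ := (P * T).le_of_opNorm_le hPT x
  have hTz : ‖T z‖ ≤ b * ‖z‖ + ‖K z‖ :=
    calc ‖T z‖ = ‖(T - K) z + K z‖ := by rw [sub_apply, sub_add_cancel]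
      _ ≤ b * ‖z‖ + ‖K z‖ := norm_add_le_of_le ((T - K).le_of_opNorm_le hTK z) le_rfl
  have hQTz : ‖Q (T z)‖ ≤ a * (b * ‖z‖ + ‖K z‖) := Q.le_of_opNorm_le_of_le hQ hTz
  have hz : ‖z‖ ≤ 2 := by
    simpa only [add_sub_cancel_left, one_add_one_eq_two] using norm_sub_le_of_le hxz hx
  have hz_sq : ‖z‖ ^ 2 ≤ 1 - ‖x‖ ^ 2 - 2 * RCLike.re ⟪x, z⟫_𝕜 := by
    linarith [@norm_add_sq 𝕜 _ _ _ _ x z, pow_le_one₀ (norm_nonneg _) hxz (n := 2)]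
  rw [norm_starProjection_add_apply_sq hP hPQ]
  calc ‖P (T x)‖ ^ 2 + 2 * RCLike.re ⟪P (T x), T z⟫_𝕜 + ‖Q (T z)‖ ^ 2
    _ ≤ (b * ‖x‖) ^ 2 + 2 * RCLike.re ⟪P (T x), T z⟫_𝕜 + (a * (b * ‖z‖ + ‖K z‖)) ^ 2 := by gcongr
    _ = b ^ 2 * ‖x‖ ^ 2 + 2 * RCLike.re ⟪P (T x), T z⟫_𝕜 +
        a ^ 2 * (b ^ 2 * ‖z‖ ^ 2 + 2 * ‖z‖ * b * ‖K z‖ + ‖K z‖ ^ 2) := by ring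
    _ ≤ _ := by gcongr; linarith

variable {Q : ι → E →L[𝕜] E}

-- Split `x i = x₀ + z i` with `z i` weakly null. As `P * Q i = P`, the vectors
-- `Q i (T x₀) ≈ P (T x₀)` and `Q i (T (z i))` are asymptotically orthogonal; `‖P (T x₀)‖ ≤ b ‖x₀‖`,
-- and `‖T (z i)‖ ≤ b ‖z i‖` up to a null sequence, since `K (z i) → 0`.
lemma eventually_norm_apply_lt_of_weakly_convergent (hP : IsStarProjection P)
    (hPQ : ∀ i, P * Q i = P) (ha : Tendsto a l (𝓝 1)) (hQa : ∀ i, ‖Q i‖ ≤ a i)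
    (hQ : ∀ x, Tendsto (fun i ↦ Q i x) l (𝓝 (P x))) (hPT : ‖P * T‖ ≤ b) (hTK : ‖T - K‖ ≤ b)
    {x : ι → E} {x₀ : E} (hx : ∀ i, ‖x i‖ ≤ 1) (hx₀ : ‖x₀‖ ≤ 1)
    (hlim : ∀ y, Tendsto (fun i ↦ ⟪x i - x₀, y⟫_𝕜) l (𝓝 0))
    (hK : Tendsto (fun i ↦ K (x i - x₀)) l (𝓝 0)) {c : ℝ} (hc : b < c) :
    ∀ᶠ i in l, ‖Q i (T (x i))‖ < c := by
  set z : ι → E := fun i ↦ x i - x₀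
  have hb : 0 ≤ b := (norm_nonneg _).trans hPT
  have hre : ∀ y, Tendsto (fun i ↦ RCLike.re ⟪y, z i⟫_𝕜) l (𝓝 0) := fun y ↦
    ((RCLike.continuous_re.tendsto' 0 0 (map_zero _)).comp (hlim y)).congr
      fun _ ↦ inner_re_symm _ _
  have hreT : Tendsto (fun i ↦ RCLike.re ⟪P (T x₀), T (z i)⟫_𝕜) l (𝓝 0) := by
    simpa only [adjoint_inner_left] using hre (adjoint T (P (T x₀)))
  have hbound : Tendsto (fun i ↦ ‖Q i (T x₀) - P (T x₀)‖ +
      √(b ^ 2 * ‖x₀‖ ^ 2 + 2 * RCLike.re ⟪P (T x₀), T (z i)⟫_𝕜 + a i ^ 2 *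
        (b ^ 2 * (1 - ‖x₀‖ ^ 2 - 2 * RCLike.re ⟪x₀, z i⟫_𝕜) + 4 * b * ‖K (z i)‖ + ‖K (z i)‖ ^ 2)))
      l (𝓝 b) := by
    have hsq := ((hreT.const_mul 2).const_add (b ^ 2 * ‖x₀‖ ^ 2)).add ((ha.pow 2).mul <|
      (((((hre x₀).const_mul 2).const_sub (1 - ‖x₀‖ ^ 2)).const_mul (b ^ 2)).add
        (hK.norm.const_mul (4 * b))).add (hK.norm.pow 2))
    convert ((hQ (T x₀)).sub_const (P (T x₀))).norm.add hsq.sqrt using 2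
    rw [sub_self, norm_zero, zero_add, eq_comm]
    exact (congrArg Real.sqrt (by ring)).trans (Real.sqrt_sq hb)
  filter_upwards [hbound.eventually_lt_const hc] with i hi
  have hsplit : Q i (T (x i)) =
      (Q i (T x₀) - P (T x₀)) + (P (T x₀) + Q i (T (z i))) := by
    simp only [z, map_sub]; abel
  rw [hsplit]
  refine (norm_add_le_of_le le_rfl (Real.le_sqrt_of_sq_le ?_)).trans_lt hi
  exact norm_starProjection_add_sq_le hP (hPQ i) (hQa i) hPT hTK hx₀ (by simpa [z] using hx i)

lemma eventually_norm_mul_lt_of_isCompactOperator {A C : E →L[𝕜] E} {B : ι → E →L[𝕜] E} {β : ℝ}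
    (hP : IsStarProjection P) (hBP : ∀ i, B i * P = P) (ha : Tendsto a l (𝓝 1))
    (hBa : ∀ i, ‖B i‖ ≤ a i) (hB : ∀ x, Tendsto (fun i ↦ star (B i) x) l (𝓝 (P x)))
    (hC : IsCompactOperator ⇑C) (hAP : ‖A * P‖ < β) (hAC : ‖A - C‖ < β) :
    ∀ᶠ i in l, ‖A * B i‖ < β := by
  obtain ⟨b, hb, hbβ⟩ := exists_between (max_lt hAP hAC)
  obtain ⟨c, hbc, hcβ⟩ := exists_between hbβ
  have hPB : ∀ i, P * star (B i) = P := fun i ↦ by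
    simpa only [star_mul, hP.isSelfAdjoint.star_eq] using congr(star $(hBP i))
  have hPA : ‖P * star A‖ ≤ b := by
    rw [← norm_star, star_mul, star_star, hP.isSelfAdjoint.star_eq]
    exact (le_max_left _ _).trans hb.le
  have hAC' : ‖star A - star C‖ ≤ b := by
    rw [← star_sub, norm_star]
    exact (le_max_right _ _).trans hb.le
  suffices ∀ᶠ i in l, ‖star (B i) * star A‖ < β from
    this.mono fun i hi ↦ by rwa [← norm_star, star_mul]
  refine eventually_opNorm_lt hcβ fun x hx ↦ mem_iff_ultrafilter.2 fun U hU ↦ ?_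
  obtain ⟨x₀, hx₀, hlim⟩ := exists_weak_limit_ultrafilter (𝕜 := 𝕜) (U := U) hx
  have hnull : ∀ y, Tendsto (fun i ↦ ⟪x i - x₀, y⟫_𝕜) U (𝓝 0) := fun y ↦ by
    simpa only [inner_sub_left, sub_self] using (hlim y).sub_const ⟪x₀, y⟫_𝕜
  have hC_null : Tendsto (fun i ↦ star C (x i - x₀)) U (𝓝 0) :=
    tendsto_adjoint_apply_of_weakly_null hC (fun i ↦ norm_sub_le_of_le (hx i) hx₀) hnull
  exact eventually_norm_apply_lt_of_weakly_convergent hP hPB (ha.mono_left hU)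
    (fun i ↦ (norm_star _).trans_le (hBa i)) (fun y ↦ (hB y).mono_left hU) hPA hAC' hx hx₀
    hnull hC_null hbc

end AsymptoticProjection

end Hilbert

section Monotone

lemma exists_monotoneOn_rightInverse {f : ℝ → ℝ} {a b : ℝ} (hab : a ≤ b)
    (hf : ContinuousOn f (Icc a b)) (hmono : MonotoneOn f (Icc a b)) :
    ∃ g : ℝ → ℝ, MonotoneOn g (Icc (f a) (f b)) ∧ ∀ c ∈ Icc (f a) (f b),
      g c ∈ Icc a b ∧ f (g c) = c := by
  choose! g hg using fun c (hc : c ∈ Icc (f a) (f b)) ↦ intermediate_value_Icc hab hf hc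
  refine ⟨g, fun c hc d hd hcd ↦ ?_, hg⟩
  by_contra! hlt
  have hdc : d ≤ c := (hg d hd).2 ▸ (hg c hc).2 ▸ hmono (hg d hd).1 (hg c hc).1 hlt.le
  exact hlt.ne (by rw [le_antisymm hcd hdc])

end Monotone

lemma exists_isCompactOperator_norm_sub_lt_of_essNorm_lt {T : H →L[ℂ] H} {β : ℝ}
    (hT : essNorm T < β) :
    ∃ C : H →L[ℂ] H, IsCompactOperator ⇑C ∧ ‖T - C‖ < β := by
  obtain ⟨C, hC, hTC⟩ := (Metric.infDist_lt_iff ⟨0, isCompactOperator_zero⟩).1 hT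
  exact ⟨C, hC, by rwa [← dist_eq_norm]⟩

namespace ContinuousNest

open ContinuousLinearMap InnerProductSpace

variable (𝒩 : ContinuousNest H) {s t : ℝ}

section Projections

lemma isStarProjection_N (ht : t ∈ Icc (0 : ℝ) 1) : IsStarProjection (𝒩.N t) :=
  ⟨𝒩.idem t ht, 𝒩.selfAdjoint t ht⟩

lemma N_mul_N_self (ht : t ∈ Icc (0 : ℝ) 1) : 𝒩.N t * 𝒩.N t = 𝒩.N t :=
  𝒩.idem t ht

lemma N_mul_N_of_ge (hs : s ∈ Icc (0 : ℝ) 1) (ht : t ∈ Icc (0 : ℝ) 1) (hst : s ≤ t) :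
    𝒩.N t * 𝒩.N s = 𝒩.N s := by
  obtain rfl | hlt := hst.eq_or_lt
  · exact 𝒩.N_mul_N_self hs
  · ext x
    obtain ⟨z, hz⟩ := (𝒩.range_lt s t hs ht hlt).le ⟨x, rfl⟩
    have hz : 𝒩.N t z = 𝒩.N s x := hz
    rw [mul_apply_eq_comp, ← hz, ← mul_apply_eq_comp, 𝒩.N_mul_N_self ht]

lemma N_mul_N_of_le (hs : s ∈ Icc (0 : ℝ) 1) (ht : t ∈ Icc (0 : ℝ) 1) (hst : s ≤ t) :
    𝒩.N s * 𝒩.N t = 𝒩.N s := by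
  simpa only [star_mul, (𝒩.selfAdjoint s hs).star_eq, (𝒩.selfAdjoint t ht).star_eq] using
    congr(star $(𝒩.N_mul_N_of_ge hs ht hst))

lemma norm_N_sub_N_apply_sq (hs : s ∈ Icc (0 : ℝ) 1) (ht : t ∈ Icc (0 : ℝ) 1) (hst : s ≤ t)
    (y : H) : ‖(𝒩.N t - 𝒩.N s) y‖ ^ 2 = ‖𝒩.N t y‖ ^ 2 - ‖𝒩.N s y‖ ^ 2 := by
  have hs_apply : 𝒩.N s (𝒩.N t y) = 𝒩.N s y := congr($(𝒩.N_mul_N_of_le hs ht hst) y)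
  have h := norm_sq_eq_starProjection_add (𝒩.isStarProjection_N hs) (𝒩.N t y)
  rw [sub_apply, one_apply_eq_self, hs_apply] at h
  rw [sub_apply, h, add_sub_cancel_left]

lemma norm_N_apply_le_of_le (hs : s ∈ Icc (0 : ℝ) 1) (ht : t ∈ Icc (0 : ℝ) 1) (hst : s ≤ t)
    (y : H) : ‖𝒩.N s y‖ ≤ ‖𝒩.N t y‖ :=
  le_of_sq_le_sq (sub_nonneg.1 (𝒩.norm_N_sub_N_apply_sq hs ht hst y ▸ sq_nonneg _))
    (norm_nonneg _)

lemma N_apply_eq_self_of_le (hs : s ∈ Icc (0 : ℝ) 1) (ht : t ∈ Icc (0 : ℝ) 1) (hst : s ≤ t)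
    {x : H} (hx : 𝒩.N s x = x) : 𝒩.N t x = x := by
  rw [← hx, ← mul_apply_eq_comp, 𝒩.N_mul_N_of_ge hs ht hst]

lemma N_apply_eq_zero_of_le (hs : s ∈ Icc (0 : ℝ) 1) (ht : t ∈ Icc (0 : ℝ) 1) (hst : s ≤ t)
    {x : H} (hx : 𝒩.N t x = 0) : 𝒩.N s x = 0 := by
  rw [← 𝒩.N_mul_N_of_le hs ht hst, mul_apply_eq_comp, hx, map_zero]

end Projections

section Algebra

lemma mem_alg_iff {A : H →L[ℂ] H} :
    A ∈ 𝒩.alg ↔ ∀ t ∈ Icc (0 : ℝ) 1, A * 𝒩.N t = 𝒩.N t * A * 𝒩.N t := by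
  simp only [alg, Set.mem_ofPred_eq, sub_mul, one_mul, sub_eq_zero]

/-- The nest algebra as a subalgebra of `B(H)`. -/
def nestAlgebra : Subalgebra ℂ (H →L[ℂ] H) where
  carrier := 𝒩.alg
  mul_mem' {A B} hA hB := 𝒩.mem_alg_iff.2 fun t ht ↦ by
    have hAN := 𝒩.mem_alg_iff.1 hA t ht
    have hBN := 𝒩.mem_alg_iff.1 hB t ht
    calc A * B * 𝒩.N t = A * 𝒩.N t * (B * 𝒩.N t) := by
          conv_lhs => rw [mul_assoc, hBN, mul_assoc (𝒩.N t), ← mul_assoc A]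
      _ = 𝒩.N t * A * (𝒩.N t * B * 𝒩.N t) := by rw [hAN]; simp only [mul_assoc]
      _ = 𝒩.N t * (A * B) * 𝒩.N t := by rw [← hBN]; simp only [mul_assoc]
  add_mem' {A B} hA hB := 𝒩.mem_alg_iff.2 fun t ht ↦ by
    rw [add_mul, 𝒩.mem_alg_iff.1 hA t ht, 𝒩.mem_alg_iff.1 hB t ht, mul_add, add_mul]
  algebraMap_mem' c := 𝒩.mem_alg_iff.2 fun t ht ↦ by
    rw [← Algebra.commutes, mul_assoc, 𝒩.N_mul_N_self ht]

lemma N_mem_nestAlgebra (ht : t ∈ Icc (0 : ℝ) 1) : 𝒩.N t ∈ 𝒩.nestAlgebra :=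
  𝒩.mem_alg_iff.2 fun s hs ↦ by
    obtain hst | hts := le_total s t
    · rw [mul_assoc, 𝒩.N_mul_N_of_ge hs ht hst, 𝒩.N_mul_N_self hs]
    · rw [𝒩.N_mul_N_of_ge ht hs hts, 𝒩.N_mul_N_of_le ht hs hts]

lemma mem_nestAlgebra_of_tendsto_apply {ι : Type*} {l : Filter ι} [l.NeBot]
    {A : ι → H →L[ℂ] H} {B : H →L[ℂ] H} (hA : ∀ i, A i ∈ 𝒩.nestAlgebra)
    (hAB : ∀ x, Tendsto (fun i ↦ A i x) l (𝓝 (B x))) : B ∈ 𝒩.nestAlgebra := by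
  refine fun t ht ↦ ext fun x ↦ ?_
  refine tendsto_nhds_unique (((1 - 𝒩.N t).continuous.tendsto _).comp (hAB (𝒩.N t x))) ?_
  exact tendsto_const_nhds.congr fun i ↦ congr($((hA i t ht).symm) x)

lemma rankOne_mem_nestAlgebra (ht : t ∈ Icc (0 : ℝ) 1) {x y : H} (hx : 𝒩.N t x = x)
    (hy : 𝒩.N t y = 0) : rankOne ℂ x y ∈ 𝒩.nestAlgebra := by
  refine fun s hs ↦ ext fun z ↦ ?_
  simp only [mul_apply_eq_comp, rankOne_apply, map_smul, zero_apply]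
  obtain hst | hts := le_total s t
  · rw [← inner_starProjection_left (𝒩.isStarProjection_N hs),
      𝒩.N_apply_eq_zero_of_le hs ht hst hy, inner_zero_left, zero_smul]
  · rw [sub_apply, one_apply_eq_self, 𝒩.N_apply_eq_self_of_le ht hs hts hx, sub_self, smul_zero]

lemma damping_mem_nestAlgebra {S : H →L[ℂ] H} (hSalg : S ∈ 𝒩.nestAlgebra) {r : ℝ} (hS : ‖S‖ ≤ 1)
    (hr₀ : 0 ≤ r) (hr₁ : r < 1) : damping r S ∈ 𝒩.nestAlgebra := by
  have hlt : ‖(r : ℂ) • S‖ < 1 := (norm_ofReal_smul_le hS hr₀).trans_lt hr₁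
  have hsum := (summable_geometric_of_norm_lt_one hlt).hasSum
  refine mul_mem (sub_mem (one_mem _) hSalg) <| 𝒩.mem_nestAlgebra_of_tendsto_apply
    (fun F ↦ sum_mem fun k _ ↦ pow_mem (𝒩.nestAlgebra.smul_mem hSalg _) k)
    fun x ↦ ((ContinuousLinearMap.apply ℂ H x).continuous.tendsto _).comp hsum

end Algebra

section Partition

lemma exists_equipartition (y : H) (n : ℕ) :
    ∃ t : Fin (n + 2) → ℝ, Monotone t ∧ (∀ i, t i ∈ Icc (0 : ℝ) 1) ∧
      ∀ i, ‖𝒩.N (t i) y‖ ^ 2 = i / (n + 1) * ‖y‖ ^ 2 := by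
  obtain ⟨g, hg, hgN⟩ := exists_monotoneOn_rightInverse (f := fun t ↦ ‖𝒩.N t y‖ ^ 2) zero_le_one
    ((𝒩.contOn y).norm.pow 2) fun s hs t ht hst ↦
      pow_le_pow_left₀ (norm_nonneg _) (𝒩.norm_N_apply_le_of_le hs ht hst y) 2
  have hmem : ∀ i : Fin (n + 2),
      i / (n + 1) * ‖y‖ ^ 2 ∈ Icc (‖𝒩.N 0 y‖ ^ 2) (‖𝒩.N 1 y‖ ^ 2) := fun i ↦ by
    have hi : (i : ℝ) ≤ n + 1 := by exact_mod_cast Fin.is_le i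
    rw [𝒩.N_zero, 𝒩.N_one, zero_apply, norm_zero, one_apply_eq_self, zero_pow two_ne_zero]
    exact ⟨by positivity,
      mul_le_of_le_one_left (sq_nonneg _) (div_le_one_of_le₀ hi (by positivity))⟩
  refine ⟨fun i ↦ g (i / (n + 1) * ‖y‖ ^ 2), fun i j hij ↦ hg (hmem i) (hmem j) ?_,
    fun i ↦ (hgN _ (hmem i)).1, fun i ↦ (hgN _ (hmem i)).2⟩
  gcongr
  exact_mod_cast hij

/-- The vectors `w i` are carried by the successive intervals `N (t (i + 1)) - N (t i)` of a
partition `t 0 ≤ ⋯ ≤ t (n + 1)` of the nest. -/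
structure IsAdapted {n : ℕ} (t : Fin (n + 2) → ℝ) (w : Fin (n + 1) → H) : Prop where
  monotone : Monotone t
  mem_Icc : ∀ i, t i ∈ Icc (0 : ℝ) 1
  N_succ_apply : ∀ i, 𝒩.N (t i.succ) (w i) = w i
  N_castSucc_apply : ∀ i, 𝒩.N (t i.castSucc) (w i) = 0

variable {𝒩} {n : ℕ} {t : Fin (n + 2) → ℝ} {w : Fin (n + 1) → H}

lemma IsAdapted.pairwise_inner_eq_zero (hw : 𝒩.IsAdapted t w) :
    Pairwise fun i j ↦ ⟪w i, w j⟫_ℂ = 0 := by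
  have hlt : ∀ i j, i < j → ⟪w i, w j⟫_ℂ = 0 := fun i j hij ↦ by
    have hj := hw.mem_Icc j.castSucc
    have hwi : 𝒩.N (t j.castSucc) (w i) = w i :=
      𝒩.N_apply_eq_self_of_le (hw.mem_Icc _) hj (hw.monotone (Fin.succ_le_castSucc_iff.2 hij))
        (hw.N_succ_apply i)
    rw [← hwi, inner_starProjection_left (𝒩.isStarProjection_N hj), hw.N_castSucc_apply,
      inner_zero_right]
  intro i j hij
  obtain h | h := hij.lt_or_gt
  · exact hlt i j h
  · exact inner_eq_zero_symm.1 (hlt j i h)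

lemma IsAdapted.backwardShift_mem_nestAlgebra (hw : 𝒩.IsAdapted t w) :
    backwardShift ℂ w ∈ 𝒩.nestAlgebra :=
  sum_mem fun i _ ↦ 𝒩.rankOne_mem_nestAlgebra (hw.mem_Icc i.succ.castSucc)
    (hw.N_succ_apply i.castSucc) (hw.N_castSucc_apply i.succ)

variable (𝒩)

lemma isAdapted_N_sub_N_apply (ht : Monotone t) (htI : ∀ i, t i ∈ Icc (0 : ℝ) 1) (y : H) :
    𝒩.IsAdapted t fun i ↦ (𝒩.N (t i.succ) - 𝒩.N (t i.castSucc)) y where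
  monotone := ht
  mem_Icc := htI
  N_succ_apply i := by
    rw [← mul_apply_eq_comp, mul_sub, 𝒩.N_mul_N_self (htI _),
      𝒩.N_mul_N_of_ge (htI _) (htI _) (ht i.castSucc_le_succ)]
  N_castSucc_apply i := by
    rw [← mul_apply_eq_comp, mul_sub, 𝒩.N_mul_N_self (htI _),
      𝒩.N_mul_N_of_le (htI _) (htI _) (ht i.castSucc_le_succ), sub_self, zero_apply]

lemma sum_N_sub_N_apply {y : H} (h₀ : 𝒩.N (t 0) y = 0) (h₁ : 𝒩.N (t (Fin.last _)) y = y) :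
    ∑ i : Fin (n + 1), (𝒩.N (t i.succ) - 𝒩.N (t i.castSucc)) y = y := by
  have h := Fin.sum_univ_succ fun i ↦ 𝒩.N (t i) y
  rw [Fin.sum_univ_castSucc, h₀, h₁, zero_add] at h
  simp only [sub_apply, Finset.sum_sub_distrib, ← h, add_sub_cancel_left]

lemma exists_isAdapted_orthonormal {y : H} (hy : y ≠ 0) (n : ℕ) :
    ∃ (t : Fin (n + 2) → ℝ) (w : Fin (n + 1) → H), 𝒩.IsAdapted t w ∧ Orthonormal ℂ w ∧
      ((‖y‖ / √(n + 1) : ℝ) : ℂ) • ∑ i, w i = y := by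
  obtain ⟨t, ht, htI, hty⟩ := 𝒩.exists_equipartition y n
  set v : Fin (n + 1) → H := fun i ↦ (𝒩.N (t i.succ) - 𝒩.N (t i.castSucc)) y
  set c : ℝ := ‖y‖ / √(n + 1) with hc_def
  have hc : 0 < c := by positivity
  have hv : 𝒩.IsAdapted t v := 𝒩.isAdapted_N_sub_N_apply ht htI y
  have hv_norm : ∀ i, ‖v i‖ = c := fun i ↦ by
    refine (sq_eq_sq₀ (norm_nonneg _) hc.le).1 ?_
    rw [𝒩.norm_N_sub_N_apply_sq (htI _) (htI _) (ht i.castSucc_le_succ), hty, hty, hc_def, div_pow,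
      Real.sq_sqrt (by positivity), Fin.val_succ, Fin.val_castSucc]
    push_cast
    ring
  have hv_sum : ∑ i, v i = y := 𝒩.sum_N_sub_N_apply
    (by simpa using hty 0)
    (starProjection_apply_eq_self_of_norm_eq (𝒩.isStarProjection_N (htI _)) <|
      (sq_eq_sq₀ (norm_nonneg _) (norm_nonneg _)).1 <| by
        rw [hty, Fin.val_last]
        push_cast
        rw [div_self (by positivity), one_mul])
  have hw : 𝒩.IsAdapted t fun i ↦ (c⁻¹ : ℂ) • v i :=
    { hv with
      N_succ_apply := fun i ↦ by rw [map_smul, hv.N_succ_apply]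
      N_castSucc_apply := fun i ↦ by rw [map_smul, hv.N_castSucc_apply, smul_zero] }
  refine ⟨t, _, hw, ⟨fun i ↦ ?_, hw.pairwise_inner_eq_zero⟩, ?_⟩
  · rw [norm_smul, hv_norm, norm_inv, Complex.norm_of_nonneg hc.le, inv_mul_cancel₀ hc.ne']
  · rw [← Finset.smul_sum, hv_sum, smul_inv_smul₀ (by exact_mod_cast hc.ne')]

end Partition

section AlmostAnnihilating

lemma exists_mem_nestAlgebra_norm_sub_star_apply_le (y : H) {ε : ℝ} (hε : 0 < ε) :
    ∃ S ∈ 𝒩.nestAlgebra, IsCompactOperator ⇑S ∧ ‖S‖ ≤ 1 ∧ ‖y - star S y‖ ≤ ε := by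
  obtain rfl | hy := eq_or_ne y 0
  · exact ⟨0, zero_mem _, isCompactOperator_zero, by simp, by simpa using hε.le⟩
  obtain ⟨n, hn⟩ := exists_nat_gt ((‖y‖ / ε) ^ 2)
  obtain ⟨t, w, hw, hw_on, hwy⟩ := 𝒩.exists_isAdapted_orthonormal hy n
  refine ⟨backwardShift ℂ w, hw.backwardShift_mem_nestAlgebra, isCompactOperator_backwardShift,
    norm_backwardShift_le_one hw_on, ?_⟩
  have hsqrt : ‖y‖ / ε ≤ √(n + 1) := Real.le_sqrt_of_sq_le (by linarith)
  calc ‖y - star (backwardShift ℂ w) y‖ = ‖((‖y‖ / √(n + 1) : ℝ) : ℂ) • w 0‖ := by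
        rw [← sum_sub_star_backwardShift_sum hw_on, smul_sub, ← map_smul, hwy]
    _ = ‖y‖ / √(n + 1) := by
        rw [norm_smul, hw_on.1 0, mul_one, Complex.norm_of_nonneg (by positivity)]
    _ ≤ ε := by rwa [div_le_iff₀ (by positivity), ← div_le_iff₀' hε]

lemma exists_mem_nestAlgebra_norm_star_apply_le (y : H) {a ε : ℝ} (ha : 1 < a) (hε : 0 < ε) :
    ∃ L ∈ 𝒩.nestAlgebra, IsCompactOperator ⇑(1 - L) ∧ ‖L‖ ≤ a ∧ ‖star L y‖ ≤ ε := by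
  have hr₀ : 0 < a⁻¹ := by positivity
  have hr₁ : a⁻¹ < 1 := inv_lt_one_of_one_lt₀ ha
  have hr : 0 < 1 - a⁻¹ := sub_pos.2 hr₁
  obtain ⟨S, hS_mem, hS_compact, hS, hSy⟩ :=
    𝒩.exists_mem_nestAlgebra_norm_sub_star_apply_le y (mul_pos hr hε)
  refine ⟨damping a⁻¹ S, 𝒩.damping_mem_nestAlgebra hS_mem hS hr₀.le hr₁, ?_,
    (norm_damping_le hS hr₀ hr₁).trans_eq (inv_inv a),
    (norm_star_damping_apply_le hS hr₀.le hr₁ y).trans ((inv_mul_le_iff₀ hr).2 hSy)⟩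
  rw [one_sub_damping hS hr₀.le hr₁]
  exact (hS_compact.comp_clm _).smul _

lemma exists_mem_nestAlgebra_forall_norm_star_apply_le (F : Finset H) {a ε : ℝ} (ha : 1 < a)
    (hε : 0 < ε) :
    ∃ L ∈ 𝒩.nestAlgebra, IsCompactOperator ⇑(1 - L) ∧ ‖L‖ ≤ a ∧ ∀ y ∈ F, ‖star L y‖ ≤ ε := by
  classical
  induction F using Finset.induction_on generalizing a ε with
  | empty =>
    exact ⟨1, one_mem _, by simpa using isCompactOperator_zero, norm_id_le.trans ha.le, by simp⟩
  | insert y F _ ih =>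
    have hb : 1 < √a := Real.lt_sqrt_of_sq_lt (by simpa using ha)
    obtain ⟨L₁, hL₁, hL₁_compact, hL₁a, hL₁F⟩ := ih hb (div_pos hε (zero_lt_one.trans hb))
    obtain ⟨L₂, hL₂, hL₂_compact, hL₂a, hL₂y⟩ :=
      𝒩.exists_mem_nestAlgebra_norm_star_apply_le (star L₁ y) hb hε
    refine ⟨L₁ * L₂, mul_mem hL₁ hL₂, ?_, ?_, fun v hv ↦ ?_⟩
    · rw [show 1 - L₁ * L₂ = (1 - L₁) + L₁ * (1 - L₂) by noncomm_ring]
      exact hL₁_compact.add (hL₂_compact.clm_comp L₁)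
    · calc ‖L₁ * L₂‖ ≤ √a * √a := norm_mul_le_of_le hL₁a hL₂a
        _ = a := Real.mul_self_sqrt (by positivity)
    · rw [star_mul, mul_apply_eq_comp]
      obtain rfl | hvF := Finset.mem_insert.1 hv
      · exact hL₂y
      · calc ‖star L₂ (star L₁ v)‖ ≤ √a * (ε / √a) :=
              le_of_opNorm_le_of_le _ ((norm_star _).trans_le hL₂a) (hL₁F v hvF)
          _ = ε := mul_div_cancel₀ _ (by positivity)

lemma exists_net_tendsto_star_apply_zero :
    ∃ L : Finset H × ℕ → H →L[ℂ] H, (∀ i, L i ∈ 𝒩.nestAlgebra) ∧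
      (∀ i, IsCompactOperator ⇑(1 - L i)) ∧ Tendsto (fun i ↦ max 1 ‖L i‖) atTop (𝓝 1) ∧
      ∀ y, Tendsto (fun i ↦ star (L i) y) atTop (𝓝 0) := by
  choose L hL_mem hL_compact hL hLF using fun i : Finset H × ℕ ↦
    𝒩.exists_mem_nestAlgebra_forall_norm_star_apply_le i.1
      (lt_add_of_pos_right 1 (Nat.one_div_pos_of_nat (α := ℝ) (n := i.2)))
      (Nat.one_div_pos_of_nat (α := ℝ) (n := i.2))
  have hlim : Tendsto (fun i : Finset H × ℕ ↦ 1 / ((i.2 : ℝ) + 1)) atTop (𝓝 0) := by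
    rw [← prod_atTop_atTop_eq]
    exact tendsto_one_div_add_atTop_nhds_zero_nat.comp tendsto_snd
  refine ⟨L, hL_mem, hL_compact, ?_, fun y ↦ squeeze_zero_norm' ?_ hlim⟩
  · refine tendsto_of_tendsto_of_tendsto_of_le_of_le tendsto_const_nhds
      (by simpa only [add_zero] using hlim.const_add 1) (fun i ↦ le_max_left _ _) fun i ↦ ?_
    exact max_le (le_add_of_nonneg_right (by positivity)) (hL i)
  · filter_upwards [eventually_ge_atTop ({y}, 0)] with i hi
    exact hLF i y (hi.1 (Finset.mem_singleton_self y))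

lemma exists_mem_nestAlgebra_norm_mul_lt {A C : H →L[ℂ] H} {β : ℝ} (hs : s ∈ Icc (0 : ℝ) 1)
    (hC : IsCompactOperator ⇑C) (hAs : ‖A * 𝒩.N s‖ < β) (hAC : ‖A - C‖ < β) :
    ∃ B ∈ 𝒩.nestAlgebra, IsCompactOperator ⇑(1 - B) ∧ B * 𝒩.N s = 𝒩.N s ∧ ‖A * B‖ < β := by
  classical
  obtain ⟨L, hL_mem, hL_compact, hL, hL_zero⟩ := 𝒩.exists_net_tendsto_star_apply_zero
  set P := 𝒩.N s
  have hP : IsStarProjection P := 𝒩.isStarProjection_N hs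
  have hP_mem : P ∈ 𝒩.nestAlgebra := 𝒩.N_mem_nestAlgebra hs
  let B : Finset H × ℕ → H →L[ℂ] H := fun i ↦ P + (1 - P) * L i * (1 - P)
  have hBP : ∀ i, B i * P = P := fun i ↦ by
    rw [add_mul, mul_assoc, hP.one_sub_mul_self, mul_zero, add_zero, hP.isIdempotentElem.eq]
  have hB_star : ∀ x, Tendsto (fun i ↦ star (B i) x) atTop (𝓝 (P x)) := fun x ↦ by
    simpa [B, hP.isSelfAdjoint.star_eq, mul_assoc] using
      (((1 - P).continuous.tendsto _).comp (hL_zero ((1 - P) x))).const_add (P x)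
  obtain ⟨i, hi⟩ := (eventually_norm_mul_lt_of_isCompactOperator hP hBP hL
    (fun i ↦ norm_starProjection_add_compression_le hP (L i)) hB_star hC hAs hAC).exists
  refine ⟨B i, add_mem hP_mem (mul_mem (mul_mem (sub_mem (one_mem _) hP_mem) (hL_mem i))
    (sub_mem (one_mem _) hP_mem)), ?_, hBP i, hi⟩
  have h_one_sub : 1 - B i = (1 - P) * ((1 - L i) * (1 - P)) := by
    rw [sub_mul 1 (L i), one_mul, mul_sub, hP.one_sub.isIdempotentElem.eq, ← mul_assoc, ← sub_sub]
  rw [h_one_sub]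
  exact ((hL_compact i).comp_clm (1 - P)).clm_comp (1 - P)

end AlmostAnnihilating

section Truncation

variable {X Y : H →L[ℂ] H} {β : ℝ}

/-- `Y` is a small lift of the truncation `X N(t)`: it lies in the nest algebra, satisfies
`Y N(t) = Y`, differs from `X N(t)` by a compact operator and has norm less than `β`. -/
structure IsSmallTruncation (X : H →L[ℂ] H) (β t : ℝ) (Y : H →L[ℂ] H) : Prop where
  mem : Y ∈ 𝒩.nestAlgebra
  mul_N : Y * 𝒩.N t = Y
  isCompactOperator_sub : IsCompactOperator ⇑(X * 𝒩.N t - Y)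
  norm_lt : ‖Y‖ < β

lemma IsSmallTruncation.exists_extension (hX : X ∈ 𝒩.nestAlgebra) (hs : s ∈ Icc (0 : ℝ) 1)
    (ht : t ∈ Icc (0 : ℝ) 1) (hst : s ≤ t) (hY : 𝒩.IsSmallTruncation X β s Y)
    (hess : essNorm (𝒩.N t * X * 𝒩.N t) < β) :
    ∃ Z, 𝒩.IsSmallTruncation X β t Z ∧ Z * 𝒩.N s = Y := by
  set P := 𝒩.N s
  set Q := 𝒩.N t
  have hPP : P * P = P := 𝒩.N_mul_N_self hs
  have hQQ : Q * Q = Q := 𝒩.N_mul_N_self ht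
  have hPQ : P * Q = P := 𝒩.N_mul_N_of_le hs ht hst
  have hQP : Q * P = P := 𝒩.N_mul_N_of_ge hs ht hst
  have hP_mem : P ∈ 𝒩.nestAlgebra := 𝒩.N_mem_nestAlgebra hs
  have hQ_mem : Q ∈ 𝒩.nestAlgebra := 𝒩.N_mem_nestAlgebra ht
  obtain ⟨C, hC, hXC⟩ := exists_isCompactOperator_norm_sub_lt_of_essNorm_lt hess
  rw [← 𝒩.mem_alg_iff.1 hX t ht] at hXC
  set A := X * Q - (X * P - Y) with hA
  have hA_mem : A ∈ 𝒩.nestAlgebra :=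
    sub_mem (mul_mem hX hQ_mem) (sub_mem (mul_mem hX hP_mem) hY.mem)
  have hAP : A * P = Y := by
    rw [hA, sub_mul, sub_mul, mul_assoc, mul_assoc, hQP, hPP, hY.mul_N, sub_sub_cancel]
  have hAC : ‖A - (C - (X * P - Y))‖ < β := by rwa [hA, sub_sub_sub_cancel_right]
  obtain ⟨B, hB_mem, hB, hBP, hAB⟩ := 𝒩.exists_mem_nestAlgebra_norm_mul_lt hs
    (hC.sub hY.isCompactOperator_sub) (hAP ▸ hY.norm_lt) hAC
  refine ⟨A * B * Q, ⟨mul_mem (mul_mem hA_mem hB_mem) hQ_mem, ?_, ?_, ?_⟩, ?_⟩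
  · rw [mul_assoc, hQQ]
  · have hYQ : Y * Q = Y := by rw [← hY.mul_N, mul_assoc, hPQ]
    have hAQ : A * Q = A := by
      rw [hA, sub_mul, sub_mul, mul_assoc, mul_assoc, hQQ, hPQ, hYQ]
    have hsplit : X * Q - A * B * Q = (X * P - Y) + A * ((1 - B) * Q) :=
      calc X * Q - A * B * Q = (X * Q - A) + (A * Q - A * B * Q) := by rw [hAQ, sub_add_sub_cancel]
        _ = (X * Q - A) + A * ((1 - B) * Q) := by noncomm_ring
        _ = (X * P - Y) + A * ((1 - B) * Q) := by rw [hA, sub_sub_cancel]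
    rw [hsplit]
    exact hY.isCompactOperator_sub.add ((hB.comp_clm Q).clm_comp A)
  · calc ‖A * B * Q‖ ≤ ‖A * B‖ * 1 :=
          norm_mul_le_of_le le_rfl (IsStarProjection.norm_le _ (𝒩.isStarProjection_N ht))
      _ < β := by rwa [mul_one]
  · rw [mul_assoc, hQP, mul_assoc, hBP, hAP]

lemma exists_seq_isSmallTruncation (hX : X ∈ 𝒩.nestAlgebra) (hβ : 0 < β) {u : ℕ → ℝ}
    (hu : Monotone u) (huI : ∀ n, u n ∈ Icc (0 : ℝ) 1)
    (hess : ∀ n, essNorm (𝒩.N (u n) * X * 𝒩.N (u n)) < β) :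
    ∃ Y : ℕ → H →L[ℂ] H, (∀ n, 𝒩.IsSmallTruncation X β (u n) (Y n)) ∧
      ∀ m n, m ≤ n → Y n * 𝒩.N (u m) = Y m := by
  have h_zero : 𝒩.IsSmallTruncation X β 0 0 :=
    ⟨zero_mem _, zero_mul _, by simpa [𝒩.N_zero] using isCompactOperator_zero, by simpa using hβ⟩
  obtain ⟨Y₀, hY₀, -⟩ := h_zero.exists_extension 𝒩 hX (left_mem_Icc.2 zero_le_one) (huI 0)
    (huI 0).1 (hess 0)
  choose! f hf hfN using fun (n : ℕ) Y (hY : 𝒩.IsSmallTruncation X β (u n) Y) ↦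
    hY.exists_extension 𝒩 hX (huI n) (huI (n + 1)) (hu n.le_succ) (hess (n + 1))
  let Y : ℕ → H →L[ℂ] H := fun n ↦ Nat.rec Y₀ f n
  have hY : ∀ n, 𝒩.IsSmallTruncation X β (u n) (Y n) := fun n ↦ by
    induction n with
    | zero => exact hY₀
    | succ n ih => exact hf n _ ih
  refine ⟨Y, hY, fun m n hmn ↦ ?_⟩
  induction n, hmn using Nat.le_induction with
  | base => exact (hY m).mul_N
  | succ n hmn ih =>
    have hstep : Y (n + 1) * 𝒩.N (u n) = Y n := hfN n _ (hY n)
    rw [← 𝒩.N_mul_N_of_ge (huI m) (huI n) (hu hmn), ← mul_assoc, hstep, ih]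

lemma tendsto_N_apply {ι : Type*} {l : Filter ι} {u : ι → ℝ} (huI : ∀ i, u i ∈ Icc (0 : ℝ) 1)
    (hu : Tendsto u l (𝓝 1)) (x : H) : Tendsto (fun i ↦ 𝒩.N (u i) x) l (𝓝 x) := by
  have h := (𝒩.contOn x 1 (right_mem_Icc.2 zero_le_one)).tendsto.comp
    (tendsto_nhdsWithin_iff.2 ⟨hu, .of_forall huI⟩)
  rwa [𝒩.N_one, one_apply_eq_self] at h

lemma exists_norm_sub_le_of_forall_essNorm_lt (hX : X ∈ 𝒩.nestAlgebra) (hβ : 0 < β)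
    (hess : ∀ t ∈ Ico (0 : ℝ) 1, essNorm (𝒩.N t * X * 𝒩.N t) < β) :
    ∃ K ∈ 𝒩.nestAlgebra, (∀ t ∈ Ico (0 : ℝ) 1, IsCompactOperator ⇑(K * 𝒩.N t)) ∧
      ‖X - K‖ ≤ β := by
  obtain ⟨u, hu, hu_mem, hu_lim⟩ := exists_seq_strictMono_tendsto' (zero_lt_one (α := ℝ))
  have huI : ∀ n, u n ∈ Icc (0 : ℝ) 1 := fun n ↦ Ioo_subset_Icc_self (hu_mem n)
  obtain ⟨Y, hY, hYN⟩ := 𝒩.exists_seq_isSmallTruncation hX hβ hu.monotone huI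
    fun n ↦ hess _ (Ioo_subset_Ico_self (hu_mem n))
  obtain ⟨Z, hZ, hYZ, hZN⟩ := exists_tendsto_apply_of_comp_eq (𝒩.tendsto_N_apply huI hu_lim)
    (fun n ↦ (hY n).norm_lt.le) hYN
  have hZ_mem : Z ∈ 𝒩.nestAlgebra :=
    𝒩.mem_nestAlgebra_of_tendsto_apply (fun n ↦ (hY n).mem) hYZ
  refine ⟨X - Z, sub_mem hX hZ_mem, fun t ht ↦ ?_, by rwa [sub_sub_cancel]⟩
  obtain ⟨n, hn⟩ := (hu_lim.eventually_const_le ht.2).exists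
  have hZn : Z * 𝒩.N (u n) = Y n := hZN n
  have hfactor : (X - Z) * 𝒩.N t = (X * 𝒩.N (u n) - Y n) * 𝒩.N t := by
    rw [← hZn, ← sub_mul, mul_assoc, 𝒩.N_mul_N_of_ge (Ico_subset_Icc_self ht) (huI n) hn]
  rw [hfactor]
  exact (hY n).isCompactOperator_sub.comp_clm (𝒩.N t)

end Truncation

section Compression

variable {X K : H →L[ℂ] H}

lemma essNorm_compression_le_norm_sub (ht : t ∈ Icc (0 : ℝ) 1)
    (hK : IsCompactOperator ⇑(K * 𝒩.N t)) : essNorm (𝒩.N t * X * 𝒩.N t) ≤ ‖X - K‖ := by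
  have hN : ‖𝒩.N t‖ ≤ 1 := IsStarProjection.norm_le _ (𝒩.isStarProjection_N ht)
  have hNK : IsCompactOperator ⇑(𝒩.N t * K * 𝒩.N t) := by
    rw [mul_assoc]
    exact hK.clm_comp (𝒩.N t)
  calc essNorm (𝒩.N t * X * 𝒩.N t) ≤ ‖𝒩.N t * (X - K) * 𝒩.N t‖ := by
        rw [mul_sub, sub_mul, ← dist_eq_norm]
        exact Metric.infDist_le_dist_of_mem hNK
    _ ≤ 1 * ‖X - K‖ * 1 := norm_mul_le_of_le (norm_mul_le_of_le hN le_rfl) hN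
    _ = ‖X - K‖ := by rw [one_mul, mul_one]

lemma bddAbove_range_essNorm_compression :
    BddAbove (range fun t : Ico (0 : ℝ) 1 ↦ essNorm (𝒩.N t.1 * X * 𝒩.N t.1)) := by
  refine ⟨‖X‖, forall_mem_range.2 fun t ↦ ?_⟩
  simpa only [sub_zero] using 𝒩.essNorm_compression_le_norm_sub (X := X) (K := 0)
    (Ico_subset_Icc_self t.2) (by simpa using isCompactOperator_zero)

end Compression

end ContinuousNest

theorem stmt8_general {H : Type*} [NormedAddCommGroup H] [InnerProductSpace ℂ H] [CompleteSpace H]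
    (𝒩 : ContinuousNest H) (X : H →L[ℂ] H) (hX : X ∈ 𝒩.alg) :
    Metric.infDist X
        {K | K ∈ 𝒩.alg ∧ ∀ t : ℝ, 0 ≤ t → t < 1 → IsCompactOperator ⇑(K * 𝒩.N t)} =
      ⨆ t : Ico (0 : ℝ) 1, essNorm (𝒩.N t.1 * X * 𝒩.N t.1) := by
  have : Nonempty (Ico (0 : ℝ) 1) := ⟨⟨0, left_mem_Ico.2 zero_lt_one⟩⟩
  refine le_antisymm (le_of_forall_gt_imp_ge_of_dense fun β hβ ↦ ?_) (ciSup_le fun t ↦ ?_)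
  · have hess : ∀ t ∈ Ico (0 : ℝ) 1, essNorm (𝒩.N t * X * 𝒩.N t) < β := fun t ht ↦
      (le_ciSup 𝒩.bddAbove_range_essNorm_compression ⟨t, ht⟩).trans_lt hβ
    have hβ₀ : 0 < β := Metric.infDist_nonneg.trans_lt (hess 0 (left_mem_Ico.2 zero_lt_one))
    obtain ⟨K, hK, hK_compact, hXK⟩ := 𝒩.exists_norm_sub_le_of_forall_essNorm_lt hX hβ₀ hess
    calc _ ≤ dist X K := Metric.infDist_le_dist_of_mem <| mem_ofPred.2
          ⟨hK, fun t h₀ h₁ ↦ hK_compact t ⟨h₀, h₁⟩⟩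
      _ ≤ β := by rwa [dist_eq_norm]
  · refine (Metric.le_infDist <| nonempty_of_mem (x := 0) <| mem_ofPred.2
      ⟨zero_mem 𝒩.nestAlgebra, fun s _ _ ↦ by simpa using isCompactOperator_zero⟩).2 fun K hK ↦ ?_
    rw [dist_eq_norm]
    exact 𝒩.essNorm_compression_le_norm_sub (Ico_subset_Icc_self t.2) (hK.2 t.1 t.2.1 t.2.2)

/-- Quotient norm formula for
`K₋ = {X ∈ Alg 𝒩 : X N(t) is compact for every t < 1}`:
`dist(X, K₋) = sup_{0 ≤ t < 1} ‖N(t) X N(t)‖ₑ`. -/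
theorem stmt8 {H : Type*} [NormedAddCommGroup H] [InnerProductSpace ℂ H] [CompleteSpace H]
    [TopologicalSpace.SeparableSpace H] (hH : ¬FiniteDimensional ℂ H)
    (𝒩 : ContinuousNest H) (X : H →L[ℂ] H) (hX : X ∈ 𝒩.alg) :
    Metric.infDist X
        {K | K ∈ 𝒩.alg ∧ ∀ t : ℝ, 0 ≤ t → t < 1 → IsCompactOperator ⇑(K * 𝒩.N t)} =
      ⨆ t : Ico (0 : ℝ) 1, essNorm (𝒩.N t.1 * X * 𝒩.N t.1) :=
  stmt8_general 𝒩 X hX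
end

section
/- Let H be a complex Hilbert space, X ∈ B(H), P an orthogonal projection on H, and a > 0 such that ‖X‖_e < a and ‖X(I − P)‖ < a. Suppose (E_n) is a sequence in B(H) with E_n = E_n P for all n, such that E_n → P and E_n* → P in the strong operator topology, and lim_n ‖I − E_n‖ = 1. Then for every ε > 0 there exists n₀ such that ‖X(I − E_n)‖ ≤ a + ε for all n ≥ n₀. -/
open Filter Topology

/-!
Test `X (1 - Eᵢ)` on vectors `xᵢ` of the unit ball that almost attain its norm. Along an
ultrafilter the `xᵢ` have a weak limit `x`, and since `(1 - Eᵢ)* → (1 - P)*` strongly,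
`yᵢ = (1 - Eᵢ) xᵢ` tends weakly to `u = (1 - P) x`. Asymptotically `‖yᵢ‖² ≈ ‖u‖² + ‖yᵢ - u‖²` and
`‖X yᵢ‖² ≈ ‖X u‖² + ‖X (yᵢ - u)‖²`. On `u`, in the range of `1 - P`, the operator `X` expands by at
most `‖X (1 - P)‖`; on the weakly null `yᵢ - u` it agrees, up to a norm-null error, with `X - K` for
any compact `K`, hence expands by at most about `‖X‖ₑ`. So `‖X yᵢ‖` is asymptotically at most
`a ‖yᵢ‖ ≤ a ‖1 - Eᵢ‖`.
-/

theorem exists_norm_le_one_and_opNorm_le_of_norm_apply_le {𝕜 E F : Type*} [DenselyNormedField 𝕜]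
    [NormedAddCommGroup E] [NormedSpace 𝕜 E] [SeminormedAddCommGroup F] [NormedSpace 𝕜 F]
    (T : E →L[𝕜] F) (c : ℝ) : ∃ x : E, ‖x‖ ≤ 1 ∧ (‖T x‖ ≤ c → ‖T‖ ≤ c) := by
  rcases le_or_gt ‖T‖ c with hT | hT
  · exact ⟨0, by simp, fun _ => hT⟩
  · obtain ⟨x, hx, hcx⟩ := T.exists_lt_apply_of_lt_opNorm hT
    exact ⟨x, hx.le, fun hxc => absurd hcx hxc.not_gt⟩

section NormedSpace

variable {𝕜 E F : Type*} [NontriviallyNormedField 𝕜]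
  [SeminormedAddCommGroup E] [NormedSpace 𝕜 E] [SeminormedAddCommGroup F] [NormedSpace 𝕜 F]

theorem norm_clm_apply_le_of_norm_sub_le {X K : E →L[𝕜] F} {a : ℝ} (hXK : ‖X - K‖ ≤ a) (z : E) :
    ‖X z‖ ≤ a * ‖z‖ + ‖K z‖ :=
  calc ‖X z‖ ≤ ‖(X - K) z‖ + ‖K z‖ := norm_le_norm_sub_add _ _
    _ ≤ a * ‖z‖ + ‖K z‖ := by gcongr; exact (X - K).le_of_opNorm_le hXK z

theorem norm_clm_apply_le_of_isIdempotentElem (X : E →L[𝕜] F) {Q : E →L[𝕜] E}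
    (hQ : IsIdempotentElem Q) (v : E) : ‖X (Q v)‖ ≤ ‖X ∘L Q‖ * ‖Q v‖ := by
  have hQv : Q (Q v) = Q v := DFunLike.congr_fun hQ.eq v
  simpa only [ContinuousLinearMap.comp_apply, hQv] using (X ∘L Q).le_opNorm (Q v)

end NormedSpace

section WeakConvergence

variable (𝕜 : Type*) {ι E F : Type*} [RCLike 𝕜]
  [NormedAddCommGroup E] [InnerProductSpace 𝕜 E] [NormedAddCommGroup F] [InnerProductSpace 𝕜 F]

/-- Weak convergence in a Hilbert space of a family `x` to `x₀` along a filter `l`. It is tested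
against inner products instead of being phrased in `WeakSpace 𝕜 E`; the two agree on complete
spaces by the Riesz representation theorem. -/
def TendstoWeakly (x : ι → E) (l : Filter ι) (x₀ : E) : Prop :=
  ∀ v : E, Tendsto (fun i => inner 𝕜 (x i) v) l (𝓝 (inner 𝕜 x₀ v))

variable {𝕜}

theorem exists_tendstoWeakly_of_isBoundedUnder [CompleteSpace E] {U : Ultrafilter ι} {x : ι → E}
    (hx : IsBoundedUnder (· ≤ ·) (U : Filter ι) fun i => ‖x i‖) :
    ∃ x₀ : E, TendstoWeakly 𝕜 x U x₀ := by
  obtain ⟨R, hR⟩ := hx.eventually_le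
  let f : ι → WeakDual 𝕜 E :=
    fun i => StrongDual.toWeakDual (InnerProductSpace.toDual 𝕜 E (x i))
  have hf : ∀ᶠ i in (U : Filter ι),
      f i ∈ WeakDual.toStrongDual ⁻¹' Metric.closedBall (0 : StrongDual 𝕜 E) R := by
    filter_upwards [hR] with i hi
    exact mem_closedBall_zero_iff.mpr (((InnerProductSpace.toDual 𝕜 E).norm_map _).trans_le hi)
  obtain ⟨g, -, hg⟩ := (WeakDual.isCompact_closedBall (0 : StrongDual 𝕜 E) R).ultrafilter_le_nhds
    (U.map f) (le_principal_iff.mpr hf)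
  refine ⟨(InnerProductSpace.toDual 𝕜 E).symm (WeakDual.toStrongDual g), fun v => ?_⟩
  rw [InnerProductSpace.toDual_symm_apply]
  exact ((WeakDual.eval_continuous v).tendsto g).comp hg

namespace TendstoWeakly

variable {l : Filter ι} {x : ι → E} {x₀ : E}

theorem clm_apply [CompleteSpace E] [CompleteSpace F] (hx : TendstoWeakly 𝕜 x l x₀)
    (T : E →L[𝕜] F) : TendstoWeakly 𝕜 (fun i => T (x i)) l (T x₀) := by
  intro v
  simpa only [ContinuousLinearMap.adjoint_inner_right] using hx (T.adjoint v)

theorem clm_apply_of_tendsto_adjoint [CompleteSpace E] [CompleteSpace F]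
    (hx : TendstoWeakly 𝕜 x l x₀) (hbdd : IsBoundedUnder (· ≤ ·) l fun i => ‖x i‖)
    {A : ι → E →L[𝕜] F} {B : E →L[𝕜] F}
    (hA : ∀ v, Tendsto (fun i => (A i).adjoint v) l (𝓝 (B.adjoint v))) :
    TendstoWeakly 𝕜 (fun i => A i (x i)) l (B x₀) := by
  intro v
  have herror : Tendsto (fun i => inner 𝕜 (x i) ((A i).adjoint v - B.adjoint v)) l (𝓝 0) :=
    squeeze_zero_norm (fun i => norm_inner_le_norm _ _)
      (isBoundedUnder_le_mul_tendsto_zero (by simpa [Function.comp_def] using hbdd)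
        (tendsto_iff_norm_sub_tendsto_zero.mp (hA v)))
  simpa only [inner_sub_right, ContinuousLinearMap.adjoint_inner_right, sub_add_cancel, zero_add]
    using herror.add (hx (B.adjoint v))

theorem tendsto_of_isCompactOperator [CompleteSpace E] [CompleteSpace F]
    (hx : TendstoWeakly 𝕜 x l x₀) (hbdd : IsBoundedUnder (· ≤ ·) l fun i => ‖x i‖)
    {K : E →L[𝕜] F} (hK : IsCompactOperator K) :
    Tendsto (fun i => K (x i)) l (𝓝 (K x₀)) := by
  obtain ⟨R, hR⟩ := hbdd.eventually_le
  obtain ⟨C, hC, hKC⟩ :=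
    IsCompactOperator.image_closedBall_subset_compact (f := (K : E →ₗ[𝕜] F)) hK R
  have hmem : ∀ᶠ i in l, K (x i) ∈ C := by
    filter_upwards [hR] with i hi
    exact hKC ⟨x i, mem_closedBall_zero_iff.mpr hi, rfl⟩
  refine hC.tendsto_nhds_of_unique_mapClusterPt hmem fun y _ hy => ?_
  obtain ⟨U, hUl, hUy⟩ := mapClusterPt_iff_ultrafilter.mp hy
  refine ext_inner_right 𝕜 fun v => ?_
  exact tendsto_nhds_unique (hUy.inner tendsto_const_nhds) ((hx.clm_apply K v).mono_left hUl)

theorem tendsto_norm_sq_sub_norm_sub_sq (hx : TendstoWeakly 𝕜 x l x₀) :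
    Tendsto (fun i => ‖x i‖ ^ 2 - ‖x i - x₀‖ ^ 2) l (𝓝 (‖x₀‖ ^ 2)) := by
  have hre : Tendsto (fun i => RCLike.re (inner 𝕜 (x i) x₀)) l (𝓝 (‖x₀‖ ^ 2)) := by
    rw [← inner_self_eq_norm_sq (𝕜 := 𝕜)]
    exact (RCLike.continuous_re.tendsto _).comp (hx x₀)
  convert (hre.const_mul 2).sub_const (‖x₀‖ ^ 2) using 2 with i
  · rw [norm_sub_sq (𝕜 := 𝕜)]
    ring
  · ring

theorem eventually_norm_clm_apply_sub_sq_le [CompleteSpace E] [CompleteSpace F]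
    (hx : TendstoWeakly 𝕜 x l x₀) (hbdd : IsBoundedUnder (· ≤ ·) l fun i => ‖x i‖)
    {X K : E →L[𝕜] F} (hK : IsCompactOperator K) {a : ℝ} (hXK : ‖X - K‖ ≤ a)
    {ε : ℝ} (hε : 0 < ε) :
    ∀ᶠ i in l, ‖X (x i - x₀)‖ ^ 2 ≤ a ^ 2 * ‖x i - x₀‖ ^ 2 + ε := by
  have hKz : Tendsto (fun i => ‖K (x i - x₀)‖) l (𝓝 0) := by
    simpa only [map_sub] using
      tendsto_iff_norm_sub_tendsto_zero.mp (hx.tendsto_of_isCompactOperator hbdd hK)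
  have hzK : Tendsto (fun i => ‖x i - x₀‖ * ‖K (x i - x₀)‖) l (𝓝 0) := by
    obtain ⟨R, hR⟩ := hbdd.eventually_le
    refine bdd_le_mul_tendsto_zero (b := 0) (B := R + ‖x₀‖)
      (.of_forall fun i => norm_nonneg _) ?_ hKz
    filter_upwards [hR] with i hi
    exact (norm_sub_le _ _).trans (by gcongr)
  have herror : Tendsto (fun i => 2 * a * (‖x i - x₀‖ * ‖K (x i - x₀)‖) + ‖K (x i - x₀)‖ ^ 2)
      l (𝓝 0) := by
    simpa using (hzK.const_mul (2 * a)).add (hKz.pow 2)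
  filter_upwards [herror.eventually_le_const hε] with i hi
  calc ‖X (x i - x₀)‖ ^ 2 ≤ (a * ‖x i - x₀‖ + ‖K (x i - x₀)‖) ^ 2 := by
        gcongr
        exact norm_clm_apply_le_of_norm_sub_le hXK _
    _ = a ^ 2 * ‖x i - x₀‖ ^ 2
        + (2 * a * (‖x i - x₀‖ * ‖K (x i - x₀)‖) + ‖K (x i - x₀)‖ ^ 2) := by ring
    _ ≤ a ^ 2 * ‖x i - x₀‖ ^ 2 + ε := by gcongr

theorem eventually_norm_clm_apply_le [CompleteSpace E] [CompleteSpace F]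
    (hx : TendstoWeakly 𝕜 x l x₀) (hbdd : IsBoundedUnder (· ≤ ·) l fun i => ‖x i‖)
    {X K : E →L[𝕜] F} (hK : IsCompactOperator K) {a : ℝ} (hXK : ‖X - K‖ ≤ a)
    (hx₀ : ‖X x₀‖ ≤ a * ‖x₀‖) {ε : ℝ} (hε : 0 < ε) :
    ∀ᶠ i in l, ‖X (x i)‖ ≤ a * ‖x i‖ + ε := by
  have ha : 0 ≤ a := (norm_nonneg _).trans hXK
  have hε_sq : 0 < ε ^ 2 / 2 := by positivity
  have hsplit : Tendsto
      (fun i => (‖X (x i)‖ ^ 2 - ‖X (x i) - X x₀‖ ^ 2) - a ^ 2 * (‖x i‖ ^ 2 - ‖x i - x₀‖ ^ 2))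
      l (𝓝 (‖X x₀‖ ^ 2 - a ^ 2 * ‖x₀‖ ^ 2)) :=
    (hx.clm_apply X).tendsto_norm_sq_sub_norm_sub_sq.sub
      (hx.tendsto_norm_sq_sub_norm_sub_sq.const_mul (a ^ 2))
  have hlimit : ‖X x₀‖ ^ 2 - a ^ 2 * ‖x₀‖ ^ 2 < ε ^ 2 / 2 := by
    have hsq : ‖X x₀‖ ^ 2 ≤ (a * ‖x₀‖) ^ 2 := by gcongr
    linarith [mul_pow a ‖x₀‖ 2]
  filter_upwards [hsplit.eventually_le_const hlimit,
    hx.eventually_norm_clm_apply_sub_sq_le hbdd hK hXK hε_sq] with i hsplit_i hdiff_i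
  rw [map_sub] at hdiff_i
  have hcross : 0 ≤ a * ‖x i‖ * ε := by positivity
  refine le_of_sq_le_sq ?_ (by positivity)
  calc ‖X (x i)‖ ^ 2 ≤ a ^ 2 * ‖x i‖ ^ 2 + ε ^ 2 := by linarith
    _ ≤ (a * ‖x i‖ + ε) ^ 2 := by linarith [add_sq (a * ‖x i‖) ε, mul_pow a ‖x i‖ 2]

end TendstoWeakly

end WeakConvergence

section OperatorNorm

variable {𝕜 ι E F G : Type*} [RCLike 𝕜]
  [NormedAddCommGroup E] [InnerProductSpace 𝕜 E] [CompleteSpace E]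
  [NormedAddCommGroup F] [InnerProductSpace 𝕜 F] [CompleteSpace F]
  [NormedAddCommGroup G] [InnerProductSpace 𝕜 G] [CompleteSpace G]

theorem eventually_opNorm_comp_le {l : Filter ι} {A : ι → E →L[𝕜] F} {B : E →L[𝕜] F}
    (hA : ∀ v, Tendsto (fun i => (A i).adjoint v) l (𝓝 (B.adjoint v)))
    (hbdd : IsBoundedUnder (· ≤ ·) l fun i => ‖A i‖)
    {X K : F →L[𝕜] G} (hK : IsCompactOperator K) {a : ℝ} (hXK : ‖X - K‖ ≤ a)
    (hXB : ∀ v, ‖X (B v)‖ ≤ a * ‖B v‖) {ε : ℝ} (hε : 0 < ε) :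
    ∀ᶠ i in l, ‖X ∘L A i‖ ≤ a * ‖A i‖ + ε := by
  have ha : 0 ≤ a := (norm_nonneg _).trans hXK
  choose x hx_le hx using fun i =>
    exists_norm_le_one_and_opNorm_le_of_norm_apply_le (X ∘L A i) (a * ‖A i‖ + ε)
  have hAx_le : ∀ i, ‖A i (x i)‖ ≤ ‖A i‖ := fun i => (A i).unit_le_opNorm _ (hx_le i)
  refine mem_iff_ultrafilter.mpr fun U hU => ?_
  have hx_bdd : IsBoundedUnder (· ≤ ·) (U : Filter ι) fun i => ‖x i‖ :=
    isBoundedUnder_of ⟨1, hx_le⟩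
  have hAx_bdd : IsBoundedUnder (· ≤ ·) (U : Filter ι) fun i => ‖A i (x i)‖ :=
    (hbdd.mono hU).mono_le (.of_forall hAx_le)
  obtain ⟨x₀, hx₀⟩ := exists_tendstoWeakly_of_isBoundedUnder (𝕜 := 𝕜) hx_bdd
  have hAx := hx₀.clm_apply_of_tendsto_adjoint hx_bdd fun v => (hA v).mono_left hU
  filter_upwards [hAx.eventually_norm_clm_apply_le hAx_bdd hK hXK (hXB x₀) hε] with i hi
  exact hx i (hi.trans (by gcongr; exact hAx_le i))

end OperatorNorm

theorem essNorm_lt_iff {H : Type*} [NormedAddCommGroup H] [InnerProductSpace ℂ H]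
    [CompleteSpace H] {T : H →L[ℂ] H} {a : ℝ} :
    essNorm T < a ↔ ∃ K : H →L[ℂ] H, IsCompactOperator K ∧ ‖T - K‖ < a := by
  have hne : {K : H →L[ℂ] H | IsCompactOperator K}.Nonempty := ⟨0, isCompactOperator_zero⟩
  simp only [essNorm, Metric.infDist_lt_iff hne, Set.mem_ofPred_eq, dist_eq_norm]

theorem stmt10_general {H ι : Type*} [NormedAddCommGroup H] [InnerProductSpace ℂ H]
    [CompleteSpace H] {X P : H →L[ℂ] H} (hP : IsStarProjection P) {a : ℝ}
    (hXe : essNorm X ≤ a) (hXP : ‖X * (1 - P)‖ ≤ a) {l : Filter ι} {E : ι → H →L[ℂ] H}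
    (hE : ∀ ξ : H, Tendsto (fun i => star (E i) ξ) l (𝓝 (P ξ)))
    (hnorm : ∀ c > 1, ∀ᶠ i in l, ‖1 - E i‖ ≤ c) {ε : ℝ} (hε : 0 < ε) :
    ∀ᶠ i in l, ‖X * (1 - E i)‖ ≤ a + ε := by
  have ha : 0 ≤ a := (norm_nonneg _).trans hXP
  obtain ⟨K, hK, hXK⟩ := essNorm_lt_iff.mp (show essNorm X < a + ε / 3 by linarith)
  have hadj : ∀ v, Tendsto (fun i => (1 - E i).adjoint v) l (𝓝 ((1 - P).adjoint v)) := by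
    intro v
    simpa [← ContinuousLinearMap.star_eq_adjoint, hP.isSelfAdjoint.star_eq] using (hE v).const_sub v
  have hrange : ∀ v, ‖X ((1 - P) v)‖ ≤ (a + ε / 3) * ‖(1 - P) v‖ := fun v =>
    (norm_clm_apply_le_of_isIdempotentElem X hP.one_sub.isIdempotentElem v).trans
      (by gcongr; exact hXP.trans (by linarith))
  have hc : 1 < 1 + ε / 3 / (a + ε / 3) := lt_add_of_pos_right 1 (by positivity)
  filter_upwards [hnorm _ hc, eventually_opNorm_comp_le hadj
    (isBoundedUnder_of_eventually_le (hnorm _ hc)) hK hXK.le hrange (ε := ε / 3) (by positivity)]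
    with i hi hXi
  calc ‖X * (1 - E i)‖ ≤ (a + ε / 3) * ‖1 - E i‖ + ε / 3 := hXi
    _ ≤ (a + ε / 3) * (1 + ε / 3 / (a + ε / 3)) + ε / 3 := by gcongr
    _ = a + ε := by field_simp; ring

/-- after Axler–Berg–Jewell–Shields. If `‖X‖ₑ < a`, `‖X(1-P)‖ < a` for an
orthogonal projection `P`, and `Eₙ = Eₙ P` converges strong-* to `P` with `‖1 - Eₙ‖ → 1`,
then for every `ε > 0` eventually `‖X(1 - Eₙ)‖ ≤ a + ε`. -/
theorem stmt10 {H : Type*} [NormedAddCommGroup H] [InnerProductSpace ℂ H] [CompleteSpace H]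
    (X P : H →L[ℂ] H) (hPidem : IsIdempotentElem P) (hPsa : IsSelfAdjoint P)
    (a : ℝ) (ha : 0 < a) (hXe : essNorm X < a) (hXP : ‖X * (1 - P)‖ < a)
    (E : ℕ → H →L[ℂ] H) (hEP : ∀ n, E n = E n * P)
    (hsot : ∀ ξ : H, Tendsto (fun n => E n ξ) atTop (𝓝 (P ξ)))
    (hsot_star : ∀ ξ : H, Tendsto (fun n => (star (E n)) ξ) atTop (𝓝 (P ξ)))
    (hnorm : Tendsto (fun n => ‖1 - E n‖) atTop (𝓝 1)) :
    ∀ ε : ℝ, 0 < ε → ∃ n₀ : ℕ, ∀ n ≥ n₀, ‖X * (1 - E n)‖ ≤ a + ε :=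
  fun _ hε => eventually_atTop.mp <| stmt10_general ⟨hPidem, hPsa⟩ hXe.le hXP.le hsot_star
    (fun _ hc => hnorm.eventually_le_const hc) hε
end

section
/- If P is a collection of nonempty bounded open intervals of ℝ whose union equals (a,b) for some real numbers a < b, then (a,b) has an inner cover with respect to P. -/
open Set

/-- A linked list of (nonempty bounded open) intervals `(a i, b i)` of `ℝ`, indexed by a
nonempty set `S` of consecutive integers, consecutive intervals overlapping and the chain
condition `a i < b (i-1) < a (i+1) < b i` holding whenever the indices involved lie in `S`. -/
structure LinkedList where
  S : Set ℤ
  nonempty : S.Nonempty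
  consecutive : ∀ i ∈ S, ∀ k ∈ S, ∀ j : ℤ, i ≤ j → j ≤ k → j ∈ S
  a : ℤ → ℝ
  b : ℤ → ℝ
  lt : ∀ i ∈ S, a i < b i
  mono_a : ∀ i : ℤ, i ∈ S → i + 1 ∈ S → a i < a (i + 1)
  mono_b : ∀ i : ℤ, i ∈ S → i + 1 ∈ S → b i < b (i + 1)
  overlap : ∀ i : ℤ, i ∈ S → i + 1 ∈ S → a (i + 1) < b i
  gap : ∀ i : ℤ, i ∈ S → i + 2 ∈ S → b i < a (i + 2)

namespace LinkedList

/-- The `i`-th interval of the list. -/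
def interval (L : LinkedList) (i : ℤ) : Set ℝ := Ioo (L.a i) (L.b i)

/-- The union of the intervals of the list. -/
def union (L : LinkedList) : Set ℝ := ⋃ i ∈ L.S, L.interval i

/-- The list has a least element. -/
def HasLeast (L : LinkedList) : Prop := ∃ i ∈ L.S, ∀ j ∈ L.S, i ≤ j

/-- The list has a greatest element. -/
def HasGreatest (L : LinkedList) : Prop := ∃ i ∈ L.S, ∀ j ∈ L.S, j ≤ i

end LinkedList

/-- `P` is a collection of nonempty bounded open intervals of `ℝ`. -/
def IsIntervalCollection (P : Set (Set ℝ)) : Prop :=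
  ∀ J ∈ P, ∃ c d : ℝ, c < d ∧ J = Ioo c d

/-- An interval is dominated by `P` if it is contained in some member of `P`. -/
def Dominated (P : Set (Set ℝ)) (J : Set ℝ) : Prop := ∃ K ∈ P, J ⊆ K

/-- An interval is approximately dominated by `P` if it is the union of an increasing
sequence of intervals, each dominated by `P`. -/
def ApproxDominated (P : Set (Set ℝ)) (J : Set ℝ) : Prop :=
  ∃ c d : ℕ → ℝ, (∀ n, c n < d n) ∧
    (∀ n, Ioo (c n) (d n) ⊆ Ioo (c (n + 1)) (d (n + 1))) ∧
    (∀ n, Dominated P (Ioo (c n) (d n))) ∧ J = ⋃ n, Ioo (c n) (d n)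

/-- An inner cover of `(x, y)` with respect to `P`: a linked list with union `(x, y)`, each of
whose intervals is approximately dominated by `P`. -/
def IsInnerCover (P : Set (Set ℝ)) (x y : ℝ) (L : LinkedList) : Prop :=
  L.union = Ioo x y ∧ ∀ i ∈ L.S, ApproxDominated P (L.interval i)

/-- An outer cover of `(x, y)` with respect to `P`: a linked list with union `(x, y)` such that
every member of `P` is contained in some interval of the list. -/
def IsOuterCover (P : Set (Set ℝ)) (x y : ℝ) (L : LinkedList) : Prop :=
  L.union = Ioo x y ∧ ∀ J ∈ P, ∃ i ∈ L.S, J ⊆ L.interval i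

/-- `L_P(x)`: the infimum of left endpoints of members of `P` containing `x`. -/
noncomputable def leftEnd (P : Set (Set ℝ)) (x : ℝ) : ℝ :=
  sInf {c | ∃ d, Ioo c d ∈ P ∧ x ∈ Ioo c d}

/-- `R_P(x)`: the supremum of right endpoints of members of `P` containing `x`. -/
noncomputable def rightEnd (P : Set (Set ℝ)) (x : ℝ) : ℝ :=
  sSup {d | ∃ c, Ioo c d ∈ P ∧ x ∈ Ioo c d}

/-!
Let `δ x` be the supremum of the radii of balls about `x` contained in members of `P`. It is
`1`-Lipschitz, positive on `(a, b)` and zero elsewhere, so `f x = x + δ x / 4` is an increasing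
bijection of `ℝ` that fixes `a` and `b` and moves every point of `(a, b)` to the right. The points
`s k = f ^ k x₀`, `k ∈ ℤ`, therefore increase from `a` to `b`, since their supremum and infimum are
fixed points of `f`. As `δ` grows at most by the factor `5 / 4` per step, three steps from `s k`
advance by less than `δ (s k)`, so `(s k, s (k + 3))` lies in a member of `P`. The intervals
`(s (2 i), s (2 i + 3))` form the linked list.
-/

section LebesgueRadius

open Metric

variable {X : Type*} [PseudoMetricSpace X] {𝒰 : Set (Set X)} {x : X} {r : ℝ}

/-- The pointwise Lebesgue number of the family `𝒰` at `x`: the supremum over `U ∈ 𝒰` of the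
distance from `x` to the complement of `U`. It measures how large a ball about `x` fits into a
single member of `𝒰`, and is meaningful when `𝒰` does not cover `X`: otherwise the supremum may be
infinite, hence `0` by convention, and the distance to the empty complement of `U = X` is `0`. -/
noncomputable def lebesgueRadius (𝒰 : Set (Set X)) (x : X) : ℝ :=
  ⨆ U : 𝒰, infDist x (U : Set X)ᶜ

theorem lebesgueRadius_nonneg (𝒰 : Set (Set X)) (x : X) : 0 ≤ lebesgueRadius 𝒰 x :=
  Real.iSup_nonneg fun _ => infDist_nonneg

theorem lebesgueRadius_eq_zero_of_notMem (hx : x ∉ ⋃₀ 𝒰) : lebesgueRadius 𝒰 x = 0 := by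
  have hdist (U : 𝒰) : infDist x (U : Set X)ᶜ = 0 :=
    infDist_zero_of_mem fun hxU => hx ⟨U, U.2, hxU⟩
  simp only [lebesgueRadius, hdist, Real.iSup_const_zero]

theorem infDist_compl_le_lebesgueRadius (h𝒰 : (⋃₀ 𝒰)ᶜ.Nonempty) {U : Set X} (hU : U ∈ 𝒰) :
    infDist x Uᶜ ≤ lebesgueRadius 𝒰 x := by
  refine le_ciSup (f := fun V : 𝒰 => infDist x (V : Set X)ᶜ) ⟨infDist x (⋃₀ 𝒰)ᶜ, ?_⟩ ⟨U, hU⟩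
  rintro _ ⟨V, rfl⟩
  exact infDist_le_infDist_of_subset (compl_subset_compl.2 (subset_sUnion_of_mem V.2)) h𝒰

theorem lipschitzWith_lebesgueRadius (h𝒰 : (⋃₀ 𝒰)ᶜ.Nonempty) :
    LipschitzWith 1 (lebesgueRadius 𝒰) := by
  refine LipschitzWith.of_le_add fun x y => Real.iSup_le (fun U => ?_)
    (add_nonneg (lebesgueRadius_nonneg 𝒰 y) dist_nonneg)
  calc infDist x (U : Set X)ᶜ ≤ infDist y (U : Set X)ᶜ + dist x y := infDist_le_infDist_add_dist
    _ ≤ lebesgueRadius 𝒰 y + dist x y := by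
      gcongr
      exact infDist_compl_le_lebesgueRadius h𝒰 U.2

theorem lebesgueRadius_pos (h𝒰 : (⋃₀ 𝒰)ᶜ.Nonempty) (hopen : ∀ U ∈ 𝒰, IsOpen U) (hx : x ∈ ⋃₀ 𝒰) :
    0 < lebesgueRadius 𝒰 x := by
  obtain ⟨U, hU, hxU⟩ := hx
  have hne : Uᶜ.Nonempty := h𝒰.mono (compl_subset_compl.2 (subset_sUnion_of_mem hU))
  have hpos : 0 < infDist x Uᶜ :=
    ((hopen U hU).isClosed_compl.notMem_iff_infDist_pos hne).1 (not_not_intro hxU)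
  exact hpos.trans_le (infDist_compl_le_lebesgueRadius h𝒰 hU)

theorem exists_ball_subset_of_lt_lebesgueRadius (hr : 0 ≤ r) (hlt : r < lebesgueRadius 𝒰 x) :
    ∃ U ∈ 𝒰, ball x r ⊆ U := by
  have : Nonempty 𝒰 := by
    by_contra! hempty
    exact hlt.not_ge (by simpa only [lebesgueRadius, Real.iSup_of_isEmpty] using hr)
  obtain ⟨U, hU⟩ := exists_lt_of_lt_ciSup hlt
  exact ⟨U, U.2, (ball_subset_ball hU.le).trans ball_infDist_compl_subset⟩

end LebesgueRadius

section ContractivePerturbation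

open scoped NNReal

variable {K : ℝ≥0}

theorem surjective_add_of_contractingWith {E : Type*} [NormedAddCommGroup E] [CompleteSpace E]
    {g : E → E} (hg : ContractingWith K g) : Function.Surjective fun x => x + g x := by
  intro y
  have hcontr : ContractingWith K fun x => y - g x :=
    ⟨hg.1, .of_dist_le_mul fun x z =>
      (dist_sub_left y (g x) (g z)).trans_le (hg.dist_le_mul x z)⟩
  exact ⟨_, eq_sub_iff_add_eq.1 hcontr.fixedPoint_isFixedPt.symm⟩

theorem strictMono_add_of_contractingWith {g : ℝ → ℝ} (hg : ContractingWith K g) :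
    StrictMono fun x => x + g x := by
  intro x y hxy
  have hdrop : g x - g y < y - x :=
    calc g x - g y ≤ dist (g x) (g y) := le_abs_self _
      _ ≤ K * dist x y := hg.dist_le_mul x y
      _ < dist x y := mul_lt_of_lt_one_left (dist_pos.2 hxy.ne) (mod_cast hg.1)
      _ = y - x := by rw [dist_comm, Real.dist_eq, abs_of_pos (sub_pos.2 hxy)]
  linarith

theorem exists_orderIso_add_of_contractingWith {g : ℝ → ℝ} (hg : ContractingWith K g) :
    ∃ f : ℝ ≃o ℝ, ∀ x, f x = x + g x :=
  ⟨(strictMono_add_of_contractingWith hg).orderIsoOfSurjective _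
    (surjective_add_of_contractingWith hg), fun _ => rfl⟩

variable {δ : ℝ → ℝ}

theorem contractingWith_div_four (hδ : LipschitzWith 1 δ) :
    ContractingWith (1 / 4) fun x => δ x / 4 := by
  refine ⟨by norm_num, LipschitzWith.of_dist_le_mul fun x y => ?_⟩
  calc dist (δ x / 4) (δ y / 4) = dist (δ x) (δ y) / 4 := by
        rw [Real.dist_eq, Real.dist_eq, ← sub_div, abs_div, abs_of_pos (four_pos : (0 : ℝ) < 4)]
    _ ≤ dist x y / 4 := by
        gcongr
        simpa only [NNReal.coe_one, one_mul] using hδ.dist_le_mul x y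
    _ = (1 / 4 : ℝ≥0) * dist x y := by
        push_cast
        ring

theorem apply_add_div_four_mem_Ioc (hδ : LipschitzWith 1 δ) {x : ℝ} (hx : 0 < δ x) :
    δ (x + δ x / 4) ∈ Ioc 0 (5 / 4 * δ x) := by
  have hchange : |δ (x + δ x / 4) - δ x| ≤ δ x / 4 := by
    simpa only [Real.dist_eq, NNReal.coe_one, one_mul, add_sub_cancel_left,
      abs_of_pos (div_pos hx four_pos)] using hδ.dist_le_mul (x + δ x / 4) x
  constructor <;> linarith [abs_le.1 hchange]

theorem iterate_three_add_div_four_lt (hδ : LipschitzWith 1 δ) {x : ℝ} (hx : 0 < δ x) :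
    (fun y => y + δ y / 4)^[3] x < x + δ x := by
  have hδ₁ : δ (x + δ x / 4) ∈ Ioc 0 (5 / 4 * δ x) := apply_add_div_four_mem_Ioc hδ hx
  have hδ₂ := apply_add_div_four_mem_Ioc hδ hδ₁.1
  simp only [Function.iterate_succ_apply, Function.iterate_zero_apply]
  linarith [hδ₁.2, hδ₂.2]

end ContractivePerturbation

section Orbit

variable {α : Type*}

theorem image_range_zpow_apply [LE α] (f : α ≃o α) (x : α) :
    f '' range (fun k : ℤ => (f ^ k) x) = range fun k : ℤ => (f ^ k) x := by
  have hshift : f ∘ (fun k : ℤ => (f ^ k) x) = (fun k : ℤ => (f ^ k) x) ∘ Equiv.addLeft 1 := by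
    funext k
    simp only [Function.comp_apply, Equiv.coe_addLeft, zpow_one_add, RelIso.mul_apply]
  rw [← range_comp, hshift, (Equiv.addLeft (1 : ℤ)).surjective.range_comp]

theorem zpow_apply_eq_of_apply_eq [LE α] {f : α ≃o α} {y : α} (hy : f y = y) (k : ℤ) :
    (f ^ k) y = y :=
  MulAction.mem_fixedBy_zpow (g := f) hy k

theorem zpow_apply_lt [Preorder α] {f : α ≃o α} {b x : α} (hb : f b = b) (hx : x < b) (k : ℤ) :
    (f ^ k) x < b :=
  ((f ^ k).strictMono hx).trans_eq (zpow_apply_eq_of_apply_eq hb k)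

theorem lt_zpow_apply [Preorder α] {f : α ≃o α} {a x : α} (ha : f a = a) (hx : a < x) (k : ℤ) :
    a < (f ^ k) x :=
  (zpow_apply_eq_of_apply_eq ha k).symm.trans_lt ((f ^ k).strictMono hx)

theorem strictMono_zpow_apply [Preorder α] {f : α ≃o α} {x : α}
    (hlt : ∀ k : ℤ, (f ^ k) x < f ((f ^ k) x)) : StrictMono fun k : ℤ => (f ^ k) x := by
  refine strictMono_int_of_lt_succ fun k => ?_
  rw [add_comm, zpow_one_add]
  exact hlt k

theorem apply_eq_of_isLUB_range_zpow [PartialOrder α] {f : α ≃o α} {x c : α}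
    (hc : IsLUB (range fun k : ℤ => (f ^ k) x) c) : f c = c := by
  have hfc := f.isLUB_image'.2 hc
  rw [image_range_zpow_apply] at hfc
  exact hfc.unique hc

theorem apply_eq_of_isGLB_range_zpow [PartialOrder α] {f : α ≃o α} {x c : α}
    (hc : IsGLB (range fun k : ℤ => (f ^ k) x) c) : f c = c := by
  have hfc := f.isGLB_image'.2 hc
  rw [image_range_zpow_apply] at hfc
  exact hfc.unique hc

variable [ConditionallyCompleteLinearOrder α] {f : α ≃o α} {a b x : α}

theorem isLUB_range_zpow_apply (hb : f b = b) (hx : x < b) (hne : ∀ y ∈ Ico x b, f y ≠ y) :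
    IsLUB (range fun k : ℤ => (f ^ k) x) b := by
  have hub : b ∈ upperBounds (range fun k : ℤ => (f ^ k) x) :=
    forall_mem_range.2 fun k => (zpow_apply_lt hb hx k).le
  obtain ⟨c, hc⟩ : ∃ c, IsLUB (range fun k : ℤ => (f ^ k) x) c :=
    ⟨_, isLUB_csSup (range_nonempty _) ⟨b, hub⟩⟩
  have hxc : x ≤ c := hc.1 ⟨0, rfl⟩
  obtain rfl : c = b := (hc.2 hub).eq_of_not_lt fun hcb =>
    hne c ⟨hxc, hcb⟩ (apply_eq_of_isLUB_range_zpow hc)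
  exact hc

theorem isGLB_range_zpow_apply (ha : f a = a) (hx : a < x) (hne : ∀ y ∈ Ioc a x, f y ≠ y) :
    IsGLB (range fun k : ℤ => (f ^ k) x) a := by
  have hlb : a ∈ lowerBounds (range fun k : ℤ => (f ^ k) x) :=
    forall_mem_range.2 fun k => (lt_zpow_apply ha hx k).le
  obtain ⟨c, hc⟩ : ∃ c, IsGLB (range fun k : ℤ => (f ^ k) x) c :=
    ⟨_, isGLB_csInf (range_nonempty _) ⟨a, hlb⟩⟩
  have hcx : c ≤ x := hc.1 ⟨0, rfl⟩
  obtain rfl : a = c := (hc.2 hlb).eq_of_not_lt fun hac =>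
    hne c ⟨hac, hcx⟩ (apply_eq_of_isGLB_range_zpow hc)
  exact hc

end Orbit

namespace LinkedList

variable {s : ℤ → ℝ}

/-- The linked list of the intervals `(s (2 i), s (2 i + 3))`, `i ∈ ℤ`, obtained from a strictly
increasing sequence `s` of reals. -/
def ofStrictMono (hs : StrictMono s) : LinkedList where
  S := univ
  nonempty := univ_nonempty
  consecutive _ _ _ _ _ _ _ := mem_univ _
  a i := s (2 * i)
  b i := s (2 * i + 3)
  lt _ _ := hs (by lia)
  mono_a _ _ _ := hs (by lia)
  mono_b _ _ _ := hs (by lia)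
  overlap _ _ _ := hs (by lia)
  gap _ _ _ := hs (by lia)

theorem union_ofStrictMono (hs : StrictMono s) {a b : ℝ} (ha : IsGLB (range s) a)
    (hb : IsLUB (range s) b) : (ofStrictMono hs).union = Ioo a b := by
  apply Subset.antisymm
  · exact iUnion₂_subset fun i _ =>
      Ioo_subset_Ioo (ha.1 (mem_range_self _)) (hb.1 (mem_range_self _))
  · rintro y ⟨hay, hyb⟩
    obtain ⟨_, ⟨m, rfl⟩, hm⟩ := (isGLB_lt_iff ha).1 hay
    obtain ⟨_, ⟨n, rfl⟩, hn⟩ := (lt_isLUB_iff hb).1 hyb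
    obtain ⟨k, hk, hmax⟩ := Int.exists_greatest_of_bdd (P := fun k => s k < y)
      ⟨n, fun k hk => (hs.lt_iff_lt.1 (hk.trans hn)).le⟩ ⟨m, hm⟩
    have hk1 : y ≤ s (k + 1) := not_lt.1 fun h => (lt_add_one k).not_ge (hmax _ h)
    exact mem_iUnion₂.2 ⟨k / 2, mem_univ _, (hs.monotone (by lia)).trans_lt hk,
      hk1.trans_lt (hs (by lia))⟩

end LinkedList

theorem IsIntervalCollection.isOpen {P : Set (Set ℝ)} (hP : IsIntervalCollection P) :
    ∀ J ∈ P, IsOpen J := by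
  intro J hJ
  obtain ⟨c, d, -, rfl⟩ := hP J hJ
  exact isOpen_Ioo

theorem Dominated.approxDominated {P : Set (Set ℝ)} {c d : ℝ} (h : Dominated P (Ioo c d))
    (hcd : c < d) : ApproxDominated P (Ioo c d) :=
  ⟨fun _ => c, fun _ => d, fun _ => hcd, fun _ => Subset.rfl, fun _ => h, (iUnion_const _).symm⟩

section Subdivision

variable {P : Set (Set ℝ)} {a b : ℝ}

theorem dominated_Ioo_of_lt_add_lebesgueRadius {x y : ℝ} (hxy : x ≤ y)
    (hy : y < x + lebesgueRadius P x) : Dominated P (Ioo x y) := by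
  obtain ⟨U, hU, hball⟩ :=
    exists_ball_subset_of_lt_lebesgueRadius (sub_nonneg.2 hxy) (sub_lt_iff_lt_add'.2 hy)
  refine ⟨U, hU, Subset.trans ?_ hball⟩
  rw [Real.ball_eq_Ioo]
  exact Ioo_subset_Ioo (by linarith) (by linarith)

theorem exists_orderIso_lt_dominated_iterate_three (hopen : ∀ J ∈ P, IsOpen J)
    (hU : ⋃₀ P = Ioo a b) :
    ∃ f : ℝ ≃o ℝ, f a = a ∧ f b = b ∧
      ∀ x ∈ Ioo a b, x < f x ∧ Dominated P (Ioo x (f^[3] x)) := by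
  have hcompl : (⋃₀ P)ᶜ.Nonempty := ⟨a, fun h => (hU ▸ h).1.false⟩
  have hlip := lipschitzWith_lebesgueRadius hcompl
  obtain ⟨f, hf⟩ := exists_orderIso_add_of_contractingWith (contractingWith_div_four hlip)
  have hfix (x : ℝ) (hx : x ∉ Ioo a b) : f x = x := by
    rw [hf, lebesgueRadius_eq_zero_of_notMem (hU ▸ hx), zero_div, add_zero]
  refine ⟨f, hfix a fun h => h.1.false, hfix b fun h => h.2.false, fun x hx => ?_⟩
  have hpos : 0 < lebesgueRadius P x := lebesgueRadius_pos hcompl hopen (hU ▸ hx)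
  have hle : id ≤ f := fun y => by
    rw [hf]
    exact le_add_of_nonneg_right (div_nonneg (lebesgueRadius_nonneg P y) zero_le_four)
  refine ⟨by rw [hf]; linarith, dominated_Ioo_of_lt_add_lebesgueRadius ?_ ?_⟩
  · exact Function.id_le_iterate_of_id_le hle 3 x
  · rw [funext hf]
    exact iterate_three_add_div_four_lt hlip hpos

theorem exists_strictMono_int_dominated_add_three (hab : a < b) (hopen : ∀ J ∈ P, IsOpen J)
    (hU : ⋃₀ P = Ioo a b) :
    ∃ s : ℤ → ℝ, StrictMono s ∧ IsGLB (range s) a ∧ IsLUB (range s) b ∧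
      ∀ k, Dominated P (Ioo (s k) (s (k + 3))) := by
  obtain ⟨f, ha, hb, hf⟩ := exists_orderIso_lt_dominated_iterate_three hopen hU
  obtain ⟨x, hx⟩ := nonempty_Ioo.2 hab
  have hmem (k : ℤ) : (f ^ k) x ∈ Ioo a b := ⟨lt_zpow_apply ha hx.1 k, zpow_apply_lt hb hx.2 k⟩
  have hne (y : ℝ) (hy : y ∈ Ioo a b) : f y ≠ y := (hf y hy).1.ne'
  refine ⟨fun k => (f ^ k) x, strictMono_zpow_apply fun k => (hf _ (hmem k)).1,
    isGLB_range_zpow_apply ha hx.1 fun y hy => hne y ⟨hy.1, hy.2.trans_lt hx.2⟩,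
    isLUB_range_zpow_apply hb hx.2 fun y hy => hne y ⟨hx.1.trans_le hy.1, hy.2⟩, fun k => ?_⟩
  have hiter : (f ^ (k + 3)) x = f^[3] ((f ^ k) x) := by
    rw [add_comm, zpow_add]
    rfl
  simpa only [hiter] using (hf _ (hmem k)).2

end Subdivision

theorem stmt11_general (P : Set (Set ℝ)) (a b : ℝ) (hab : a < b) (hopen : ∀ J ∈ P, IsOpen J)
    (hU : ⋃₀ P = Ioo a b) :
    ∃ L : LinkedList, L.union = Ioo a b ∧ ∀ i ∈ L.S, Dominated P (L.interval i) := by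
  obtain ⟨s, hs, ha, hb, hdom⟩ := exists_strictMono_int_dominated_add_three hab hopen hU
  exact ⟨.ofStrictMono hs, LinkedList.union_ofStrictMono hs ha hb, fun i _ => hdom (2 * i)⟩

/-- If `P` is a collection of nonempty bounded open intervals with
`⋃₀ P = (a, b)`, then `(a, b)` has an inner cover with respect to `P`. -/
theorem stmt11 (P : Set (Set ℝ)) (a b : ℝ) (hab : a < b)
    (hP : IsIntervalCollection P) (hU : ⋃₀ P = Ioo a b) :
    ∃ L : LinkedList, IsInnerCover P a b L := by
  obtain ⟨L, hL, hdom⟩ := stmt11_general P a b hab hP.isOpen hU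
  exact ⟨L, hL, fun i hi => (hdom i hi).approxDominated (L.lt i hi)⟩
end
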